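/- arXiv:1309.0139 — 4 statements merged into one kernel-verified Lean document; each statement's English description precedes it below -/
import Mathlib

section
/- Given real numbers ρ > 0, T > 0 and τ ∈ (0, T], there exists a smooth function Ψ̄ : [0,∞) × [0,T] → ℝ satisfying: (1) the support of Ψ̄ is contained in [0,ρ] × [0,T] and 0 ≤ Ψ̄(r,t) ≤ 1 everywhere; (2) Ψ̄(r,t) = 1 for all (r,t) ∈ [0, ρ/2] × [τ, T], and ∂Ψ̄/∂r(r,t) = 0 for all (r,t) ∈ [0, ρ/2] × [0,T]; (3) there exists a constant C̄ > 0 such that |∂Ψ̄/∂t(r,t)| ≤ C̄ · Ψ̄(r,t)^{1/2} / τ on [0,∞) × [0,T], and Ψ̄(r,0) = 0 for all r ∈ [0,∞); (4) for every a ∈ (0,1) there exists a constant C_a > 0 such that −C_a · Ψ̄(r,t)^a / ρ ≤ ∂Ψ̄/∂r(r,t) ≤ 0 and |∂²Ψ̄/∂r²(r,t)| ≤ C_a · Ψ̄(r,t)^a / ρ² on [0,∞) × [0,T]. -/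
/-!
The cutoff is `Ψ(r, t) = S (2 - 2 r / ρ) * S (t / τ)`, where `S` is the smooth transition built from
`E x = exp (-1 / x)`. Every derivative of `E` has the form `p (1 / x) * E x` with `p` a polynomial.
For `a < 1` the factorization `E x = E (x / (1 - a)) * E x ^ a` lets the first factor absorb the
pole of `p (1 / x)`, so each derivative of `E` is a continuous function times `E ^ a`. This property
passes to `S`, which is `E` times a positive smooth function. As `S` is locally constant outside
`[0, 1]`, compactness gives `|S⁽ⁿ⁾| ≤ K * S ^ a` for `n ≥ 1`. The bounds for `Ψ` follow by
rescaling, since a factor with values in `[0, 1]` is at most its `a`-th power.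
-/

open Real Polynomial Set Filter Topology

section ExpNegInvGlue

variable {a : ℝ}

lemma expNegInvGlue_eq_mul_rpow (ha : a < 1) (x : ℝ) :
    expNegInvGlue x = expNegInvGlue (x / (1 - a)) * expNegInvGlue x ^ a := by
  have one_sub_pos : 0 < 1 - a := sub_pos.2 ha
  rcases le_or_gt x 0 with hx | hx
  · simp [expNegInvGlue.zero_of_nonpos, hx, div_nonpos_of_nonpos_of_nonneg hx one_sub_pos.le]
  · simp only [expNegInvGlue, hx.not_ge, (div_pos hx one_sub_pos).not_ge, if_false]
    rw [← exp_mul, ← exp_add]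
    congr 1
    field_simp
    ring

lemma exists_iteratedDeriv_expNegInvGlue_eq_polynomial (n : ℕ) :
    ∃ p : ℝ[X], iteratedDeriv n expNegInvGlue = fun x => p.eval x⁻¹ * expNegInvGlue x := by
  induction n with
  | zero => exact ⟨1, by simp⟩
  | succ n ih =>
    obtain ⟨p, hp⟩ := ih
    refine ⟨X ^ 2 * (p - derivative p), ?_⟩
    rw [iteratedDeriv_succ, hp]
    exact funext fun x => (expNegInvGlue.hasDerivAt_polynomial_eval_inv_mul p x).deriv

lemma exists_continuous_iteratedDeriv_expNegInvGlue_eq_mul_rpow (n : ℕ) (ha : a < 1) :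
    ∃ g : ℝ → ℝ, Continuous g ∧
      ∀ x, iteratedDeriv n expNegInvGlue x = g x * expNegInvGlue x ^ a := by
  obtain ⟨p, hp⟩ := exists_iteratedDeriv_expNegInvGlue_eq_polynomial n
  set q : ℝ[X] := p.comp (C (1 - a)⁻¹ * X)
  have eval_q (x : ℝ) : q.eval (x / (1 - a))⁻¹ = p.eval x⁻¹ := by
    have one_sub_ne : 1 - a ≠ 0 := (sub_pos.2 ha).ne'
    simp only [q, eval_comp, eval_mul, eval_C, eval_X]
    congr 1
    field_simp
  refine ⟨fun x => q.eval (x / (1 - a))⁻¹ * expNegInvGlue (x / (1 - a)),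
    (expNegInvGlue.continuous_polynomial_eval_inv_mul q).comp (continuous_id.div_const _),
    fun x => ?_⟩
  simp only [hp, eval_q, mul_assoc, ← expNegInvGlue_eq_mul_rpow ha x]

lemma exists_continuous_iteratedDeriv_expNegInvGlue_mul_eq_mul_rpow {n : ℕ} {h : ℝ → ℝ}
    (hh : ContDiff ℝ n h) (ha : a < 1) :
    ∃ g : ℝ → ℝ, Continuous g ∧
      ∀ x, iteratedDeriv n (expNegInvGlue * h) x = g x * expNegInvGlue x ^ a := by
  choose g g_cont hg using fun i : ℕ =>
    exists_continuous_iteratedDeriv_expNegInvGlue_eq_mul_rpow i ha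
  refine ⟨fun x => ∑ i ∈ Finset.range (n + 1), n.choose i * g i x * iteratedDeriv (n - i) h x,
    continuous_finsetSum _ fun i _ => (continuous_const.mul (g_cont i)).mul
      (hh.continuous_iteratedDeriv _ (mod_cast n.sub_le i)), fun x => ?_⟩
  rw [iteratedDeriv_mul expNegInvGlue.contDiff.contDiffAt hh.contDiffAt, Finset.sum_mul]
  exact Finset.sum_congr rfl fun i _ => by rw [hg i x]; ring

end ExpNegInvGlue

section SmoothTransition

variable {a : ℝ} {n : ℕ}

lemma exists_continuous_iteratedDeriv_smoothTransition_eq_mul_rpow (n : ℕ) (ha : a < 1) :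
    ∃ g : ℝ → ℝ, Continuous g ∧
      ∀ x, iteratedDeriv n smoothTransition x = g x * smoothTransition x ^ a := by
  set D : ℝ → ℝ := fun x => expNegInvGlue x + expNegInvGlue (1 - x)
  have D_pos : ∀ x, 0 < D x := smoothTransition.pos_denom
  have D_contDiff : ContDiff ℝ n D := by
    have := expNegInvGlue.contDiff (n := n)
    fun_prop
  have transition_eq : smoothTransition = expNegInvGlue * D⁻¹ :=
    funext fun x => div_eq_mul_inv _ _
  have glue_eq (x : ℝ) : expNegInvGlue x = D x * smoothTransition x :=
    (mul_div_cancel₀ _ (D_pos x).ne').symm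
  obtain ⟨g, g_cont, hg⟩ := exists_continuous_iteratedDeriv_expNegInvGlue_mul_eq_mul_rpow
    (D_contDiff.inv fun x => (D_pos x).ne') ha
  refine ⟨fun x => g x * D x ^ a,
    g_cont.mul (D_contDiff.continuous.rpow_const fun x => .inl (D_pos x).ne'), fun x => ?_⟩
  rw [mul_assoc, ← mul_rpow (D_pos x).le (smoothTransition.nonneg x), ← glue_eq, ← hg]
  exact congrArg (iteratedDeriv n · x) transition_eq

lemma iteratedDeriv_smoothTransition_eq_zero (hn : n ≠ 0) {x : ℝ} (hx : x ∉ Icc (0 : ℝ) 1) :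
    iteratedDeriv n smoothTransition x = 0 := by
  have locally_const : ∃ c : ℝ, smoothTransition =ᶠ[𝓝 x] fun _ => c := by
    rcases lt_or_ge x 0 with hx0 | hx0
    · exact ⟨0, (eventually_le_nhds hx0).mono fun _ => smoothTransition.zero_of_nonpos⟩
    · have one_lt : 1 < x := not_le.1 fun hx1 => hx ⟨hx0, hx1⟩
      exact ⟨1, (eventually_ge_nhds one_lt).mono fun _ => smoothTransition.one_of_one_le⟩
  obtain ⟨c, hc⟩ := locally_const
  rw [hc.iteratedDeriv_eq, iteratedDeriv_const, if_neg hn]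

lemma exists_abs_iteratedDeriv_smoothTransition_le (hn : n ≠ 0) (ha : a < 1) :
    ∃ K > 0, ∀ x, |iteratedDeriv n smoothTransition x| ≤ K * smoothTransition x ^ a := by
  obtain ⟨g, g_cont, hg⟩ := exists_continuous_iteratedDeriv_smoothTransition_eq_mul_rpow n ha
  obtain ⟨K, K_pos, hK⟩ := (isCompact_Icc.image g_cont).isBounded.exists_pos_norm_le
  refine ⟨K, K_pos, fun x => ?_⟩
  have transition_rpow_nonneg : 0 ≤ smoothTransition x ^ a :=
    rpow_nonneg (smoothTransition.nonneg x) a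
  by_cases hx : x ∈ Icc (0 : ℝ) 1
  · rw [hg, abs_mul, abs_of_nonneg transition_rpow_nonneg]
    gcongr
    exact hK _ (mem_image_of_mem g hx)
  · rw [iteratedDeriv_smoothTransition_eq_zero hn hx, abs_zero]
    positivity

end SmoothTransition

section Rescaling

lemma iteratedDeriv_comp_const_add_const_mul {𝕜 : Type*} [NontriviallyNormedField 𝕜] {n : ℕ}
    {f : 𝕜 → 𝕜} (hf : ContDiff 𝕜 n f) (b c x : 𝕜) :
    iteratedDeriv n (fun y => f (b + c * y)) x = c ^ n * iteratedDeriv n f (b + c * x) := by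
  have shift_contDiff : ContDiff 𝕜 n fun y => f (b + y) := hf.comp (contDiff_const.add contDiff_id)
  rw [iteratedDeriv_comp_const_mul shift_contDiff, iteratedDeriv_comp_const_add]

lemma abs_iteratedDeriv_comp_affine_mul_const_le {n : ℕ} {f : ℝ → ℝ} {K a v : ℝ}
    (hf : ContDiff ℝ n f) (f_nonneg : ∀ x, 0 ≤ f x)
    (hK : ∀ x, |iteratedDeriv n f x| ≤ K * f x ^ a) (ha : a ≤ 1) (hv : v ∈ Icc (0 : ℝ) 1)
    (b c x : ℝ) :
    |iteratedDeriv n (fun y => f (b + c * y) * v) x| ≤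
      K * |c| ^ n * (f (b + c * x) * v) ^ a := by
  have le_rpow : v ≤ v ^ a := self_le_rpow_of_le_one hv.1 hv.2 ha
  rw [iteratedDeriv_mul_const_field, iteratedDeriv_comp_const_add_const_mul hf, abs_mul, abs_mul,
    abs_pow, abs_of_nonneg hv.1, mul_rpow (f_nonneg _) hv.1]
  calc |c| ^ n * |iteratedDeriv n f (b + c * x)| * v
      ≤ |c| ^ n * (K * f (b + c * x) ^ a) * v ^ a :=
        mul_le_mul (by gcongr; exact hK _) le_rpow hv.1
          (mul_nonneg (by positivity) ((abs_nonneg _).trans (hK _)))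
    _ = K * |c| ^ n * (f (b + c * x) ^ a * v ^ a) := by ring

end Rescaling

/-- The space-time cutoff `Ψ̄(r, t)` of radius `ρ` and time scale `τ`, defined for all real `r` and
`t`: the radial factor decreases from `1` at `r = ρ / 2` to `0` at `r = ρ`, and the temporal factor
increases from `0` at `t = 0` to `1` at `t = τ`. -/
noncomputable def spaceTimeCutoff (ρ τ r t : ℝ) : ℝ :=
  smoothTransition (2 - 2 * r / ρ) * smoothTransition (t / τ)

namespace spaceTimeCutoff

variable {ρ r t : ℝ}

lemma contDiff (ρ τ : ℝ) {n : ℕ∞} :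
    ContDiff ℝ n fun p : ℝ × ℝ => spaceTimeCutoff ρ τ p.1 p.2 := by
  unfold spaceTimeCutoff
  fun_prop

lemma mem_Icc (ρ τ r t : ℝ) : spaceTimeCutoff ρ τ r t ∈ Icc (0 : ℝ) 1 :=
  unitInterval.mul_mem ⟨smoothTransition.nonneg _, smoothTransition.le_one _⟩
    ⟨smoothTransition.nonneg _, smoothTransition.le_one _⟩

lemma eq_zero_of_radius_le (hρ : 0 < ρ) (hr : ρ ≤ r) (τ t : ℝ) : spaceTimeCutoff ρ τ r t = 0 := by
  have arg_nonpos : 2 - 2 * r / ρ ≤ 0 := by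
    rw [sub_nonpos, le_div_iff₀ hρ]
    linarith
  rw [spaceTimeCutoff, smoothTransition.zero_of_nonpos arg_nonpos, zero_mul]

lemma apply_zero_right (ρ τ r : ℝ) : spaceTimeCutoff ρ τ r 0 = 0 := by
  simp [spaceTimeCutoff]

lemma eq_smoothTransition_of_le_half (hρ : 0 < ρ) (hr : r ≤ ρ / 2) (τ t : ℝ) :
    spaceTimeCutoff ρ τ r t = smoothTransition (t / τ) := by
  have one_le_arg : 1 ≤ 2 - 2 * r / ρ := by
    rw [le_sub_comm, div_le_iff₀ hρ]
    linarith
  rw [spaceTimeCutoff, smoothTransition.one_of_one_le one_le_arg, one_mul]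

lemma eq_one {τ : ℝ} (hρ : 0 < ρ) (hτ : 0 < τ) (hr : r ≤ ρ / 2) (ht : τ ≤ t) :
    spaceTimeCutoff ρ τ r t = 1 := by
  rw [eq_smoothTransition_of_le_half hρ hr,
    smoothTransition.one_of_one_le ((one_le_div hτ).2 ht)]

lemma antitone_radial (hρ : 0 ≤ ρ) (τ t : ℝ) : Antitone fun r => spaceTimeCutoff ρ τ r t := by
  intro r s hrs
  exact mul_le_mul_of_nonneg_right (smoothTransition.monotone (by gcongr))
    (smoothTransition.nonneg _)

lemma deriv_radial_eq_zero (hρ : 0 < ρ) (hr : r ≤ ρ / 2) (τ t : ℝ) :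
    deriv (fun s => spaceTimeCutoff ρ τ s t) r = 0 := by
  have le_value_at_r (s : ℝ) : spaceTimeCutoff ρ τ s t ≤ spaceTimeCutoff ρ τ r t := by
    rw [eq_smoothTransition_of_le_half hρ hr]
    exact mul_le_of_le_one_left (smoothTransition.nonneg _) (smoothTransition.le_one _)
  exact IsLocalMax.deriv_eq_zero (Eventually.of_forall le_value_at_r)

variable {a : ℝ} {n : ℕ}

lemma exists_abs_iteratedDeriv_time_le (hn : n ≠ 0) (ha : a < 1) :
    ∃ K > 0, ∀ ρ r t τ : ℝ, 0 < τ →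
      |iteratedDeriv n (fun s => spaceTimeCutoff ρ τ r s) t| ≤
        K * spaceTimeCutoff ρ τ r t ^ a / τ ^ n := by
  obtain ⟨K, K_pos, hK⟩ := exists_abs_iteratedDeriv_smoothTransition_le hn ha
  refine ⟨K, K_pos, fun ρ r t τ hτ => ?_⟩
  have cutoff_eq (s : ℝ) : spaceTimeCutoff ρ τ r s =
      smoothTransition (0 + τ⁻¹ * s) * smoothTransition (2 - 2 * r / ρ) := by
    rw [spaceTimeCutoff, zero_add, inv_mul_eq_div, mul_comm]
  simp only [cutoff_eq]
  convert abs_iteratedDeriv_comp_affine_mul_const_le smoothTransition.contDiff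
    smoothTransition.nonneg hK ha.le
    ⟨smoothTransition.nonneg (2 - 2 * r / ρ), smoothTransition.le_one _⟩ 0 τ⁻¹ t using 1
  rw [abs_of_pos (inv_pos.2 hτ), inv_pow]
  ring

lemma exists_abs_iteratedDeriv_radial_le (hn : n ≠ 0) (ha : a < 1) :
    ∃ K > 0, ∀ τ r t ρ : ℝ, 0 < ρ →
      |iteratedDeriv n (fun s => spaceTimeCutoff ρ τ s t) r| ≤
        K * spaceTimeCutoff ρ τ r t ^ a / ρ ^ n := by
  obtain ⟨K, K_pos, hK⟩ := exists_abs_iteratedDeriv_smoothTransition_le hn ha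
  refine ⟨K * 2 ^ n, by positivity, fun τ r t ρ hρ => ?_⟩
  have cutoff_eq (s : ℝ) : spaceTimeCutoff ρ τ s t =
      smoothTransition (2 + -(2 / ρ) * s) * smoothTransition (t / τ) := by
    rw [spaceTimeCutoff, neg_mul, ← sub_eq_add_neg, div_mul_eq_mul_div]
  simp only [cutoff_eq]
  convert abs_iteratedDeriv_comp_affine_mul_const_le smoothTransition.contDiff
    smoothTransition.nonneg hK ha.le
    ⟨smoothTransition.nonneg (t / τ), smoothTransition.le_one _⟩ 2 (-(2 / ρ)) r using 1
  rw [abs_neg, abs_of_pos (div_pos two_pos hρ), div_pow]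
  ring

lemma exists_abs_deriv_time_le (ha : a < 1) :
    ∃ K > 0, ∀ ρ r t τ : ℝ, 0 < τ →
      |deriv (fun s => spaceTimeCutoff ρ τ r s) t| ≤ K * spaceTimeCutoff ρ τ r t ^ a / τ := by
  simpa only [iteratedDeriv_one, pow_one] using exists_abs_iteratedDeriv_time_le one_ne_zero ha

lemma exists_radial_deriv_bounds (ha : a < 1) :
    ∃ K > 0, ∀ τ r t ρ : ℝ, 0 < ρ →
      (-(K * spaceTimeCutoff ρ τ r t ^ a / ρ) ≤ deriv (fun s => spaceTimeCutoff ρ τ s t) r ∧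
        deriv (fun s => spaceTimeCutoff ρ τ s t) r ≤ 0) ∧
      |deriv (fun s => deriv (fun s' => spaceTimeCutoff ρ τ s' t) s) r| ≤
        K * spaceTimeCutoff ρ τ r t ^ a / ρ ^ 2 := by
  obtain ⟨K₁, K₁_pos, hK₁⟩ := exists_abs_iteratedDeriv_radial_le one_ne_zero ha
  obtain ⟨K₂, -, hK₂⟩ := exists_abs_iteratedDeriv_radial_le two_ne_zero ha
  simp only [iteratedDeriv_one, pow_one] at hK₁
  simp only [iteratedDeriv_succ, iteratedDeriv_zero] at hK₂
  refine ⟨max K₁ K₂, lt_max_of_lt_left K₁_pos, fun τ r t ρ hρ => ?_⟩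
  have cutoff_rpow_nonneg : 0 ≤ spaceTimeCutoff ρ τ r t ^ a :=
    rpow_nonneg (mem_Icc ρ τ r t).1 a
  refine ⟨⟨neg_le_of_abs_le ((hK₁ τ r t ρ hρ).trans ?_),
    (antitone_radial hρ.le τ t).deriv_nonpos⟩, (hK₂ τ r t ρ hρ).trans ?_⟩
  · gcongr
    exact le_max_left _ _
  · gcongr
    exact le_max_right _ _

end spaceTimeCutoff

/-- The cutoff-function lemma (Lemma 2.2): given `ρ > 0`, `T > 0` and `τ ∈ (0, T]`,
there is a smooth function `Ψ̄(r, t)` of the radial variable `r ≥ 0` and the time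
variable `t ∈ [0, T]` with values in `[0, 1]`, supported in `[0, ρ] × [0, T]`,
equal to `1` on `[0, ρ/2] × [τ, T]`, with vanishing `r`-derivative on `[0, ρ/2]`,
satisfying `|∂Ψ̄/∂t| ≤ C̄·Ψ̄^{1/2}/τ`, `Ψ̄(·, 0) = 0`, and for each `a ∈ (0, 1)` the
bounds `−Cₐ·Ψ̄^a/ρ ≤ ∂Ψ̄/∂r ≤ 0` and `|∂²Ψ̄/∂r²| ≤ Cₐ·Ψ̄^a/ρ²`. -/
theorem exists_cutoff_function (ρ T τ : ℝ) (hρ : 0 < ρ) (hT : 0 < T)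
    (hτ : τ ∈ Set.Ioc 0 T) :
    ∃ Ψ : ℝ → ℝ → ℝ,
      -- smoothness (jointly in both variables)
      ContDiff ℝ (⊤ : ℕ∞) (fun p : ℝ × ℝ => Ψ p.1 p.2) ∧
      -- (1) support in [0, ρ] × [0, T] and values in [0, 1]
      (∀ r ∈ Set.Ici (0 : ℝ), ∀ t ∈ Set.Icc 0 T, ρ < r → Ψ r t = 0) ∧
      (∀ r ∈ Set.Ici (0 : ℝ), ∀ t ∈ Set.Icc 0 T, 0 ≤ Ψ r t ∧ Ψ r t ≤ 1) ∧
      -- (2) Ψ = 1 on [0, ρ/2] × [τ, T] and ∂Ψ/∂r = 0 on [0, ρ/2] × [0, T]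
      (∀ r ∈ Set.Icc 0 (ρ / 2), ∀ t ∈ Set.Icc τ T, Ψ r t = 1) ∧
      (∀ r ∈ Set.Icc 0 (ρ / 2), ∀ t ∈ Set.Icc 0 T,
        deriv (fun s => Ψ s t) r = 0) ∧
      -- (3) time-derivative bound and vanishing at t = 0
      (∃ C₀ : ℝ, 0 < C₀ ∧ ∀ r ∈ Set.Ici (0 : ℝ), ∀ t ∈ Set.Icc 0 T,
        |deriv (fun s => Ψ r s) t| ≤ C₀ * (Ψ r t) ^ ((1 : ℝ) / 2) / τ) ∧
      (∀ r ∈ Set.Ici (0 : ℝ), Ψ r 0 = 0) ∧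
      -- (4) radial-derivative bounds for each a ∈ (0, 1)
      (∀ a ∈ Set.Ioo (0 : ℝ) 1, ∃ Ca : ℝ, 0 < Ca ∧
        ∀ r ∈ Set.Ici (0 : ℝ), ∀ t ∈ Set.Icc 0 T,
          (-(Ca * (Ψ r t) ^ a / ρ) ≤ deriv (fun s => Ψ s t) r ∧
            deriv (fun s => Ψ s t) r ≤ 0) ∧
          |deriv (fun s => deriv (fun s' => Ψ s' t) s) r| ≤ Ca * (Ψ r t) ^ a / ρ ^ 2) := by
  have hτ_pos : 0 < τ := hτ.1
  obtain ⟨C₀, C₀_pos, time_bound⟩ :=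
    spaceTimeCutoff.exists_abs_deriv_time_le (a := 1 / 2) (by norm_num)
  refine ⟨spaceTimeCutoff ρ τ, spaceTimeCutoff.contDiff ρ τ,
    fun r _ t _ hr => spaceTimeCutoff.eq_zero_of_radius_le hρ hr.le τ t,
    fun r _ t _ => spaceTimeCutoff.mem_Icc ρ τ r t,
    fun r hr t ht => spaceTimeCutoff.eq_one hρ hτ_pos hr.2 ht.1,
    fun r hr t _ => spaceTimeCutoff.deriv_radial_eq_zero hρ hr.2 τ t,
    ⟨C₀, C₀_pos, fun r _ t _ => time_bound ρ r t τ hτ_pos⟩,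
    fun r _ => spaceTimeCutoff.apply_zero_right ρ τ r, fun a ha => ?_⟩
  obtain ⟨Ca, Ca_pos, radial_bounds⟩ := spaceTimeCutoff.exists_radial_deriv_bounds ha.2
  exact ⟨Ca, Ca_pos, fun r _ t _ => radial_bounds τ r t ρ hρ⟩
end

section
/- Let n ≥ 1, T > 0 and A₁, A₂, A₃ > 0. Let u : ℝⁿ × (0,T] → (0,∞) be a smooth positive function, set f = log u, and assume that ∂f/∂t(x,t) ≥ (1/A₁)(‖∇f(x,t)‖² − A₂ − A₃/t) for all x ∈ ℝⁿ and t ∈ (0,T]. Then for all 0 < t₁ < t₂ ≤ T, all x₁, x₂ ∈ ℝⁿ, and every continuously differentiable path γ : [t₁,t₂] → ℝⁿ with γ(t₁) = x₁ and γ(t₂) = x₂, one has u(x₂,t₂) ≥ u(x₁,t₁) · (t₂/t₁)^{−A₃/A₁} · exp( −(A₁/4)∫_{t₁}^{t₂} ‖γ'(t)‖² dt − (A₂/A₁)(t₂ − t₁) ). -/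
/-!
Along the space-time curve `t ↦ (γ t, t)` the function `f = log u` has derivative
`⟪∇f, γ'⟫ + ∂f/∂t`. The differential inequality bounds this from below by
`⟪∇f, γ'⟫ + ‖∇f‖² / A₁ - A₂ / A₁ - A₃ / (A₁ t)`, and completing the square in `∇f` removes the
gradient at the cost of `-(A₁ / 4) ‖γ'‖²`. Integrating from `t₁` to `t₂` and exponentiating gives
the Harnack inequality.
-/

open Set

section InnerProductSpace

variable {E : Type*} [NormedAddCommGroup E] [InnerProductSpace ℝ E]

lemma neg_mul_norm_sq_le_inner_add_norm_sq_div {a : ℝ} (ha : 0 < a) (g v : E) :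
    -(a / 4) * ‖v‖ ^ 2 ≤ inner ℝ g v + ‖g‖ ^ 2 / a := by
  have complete_square :
      inner ℝ g v + ‖g‖ ^ 2 / a + a / 4 * ‖v‖ ^ 2 = ‖g + (a / 2) • v‖ ^ 2 / a := by
    rw [norm_add_sq_real, real_inner_smul_right, norm_smul, mul_pow, Real.norm_eq_abs, sq_abs]
    field_simp
    ring
  have square_nonneg : 0 ≤ ‖g + (a / 2) • v‖ ^ 2 / a := by positivity
  linarith

variable [CompleteSpace E] {f : E → ℝ → ℝ} {γ γ' : ℝ → E}

lemma hasDerivAt_along_path {t : ℝ} {v : E}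
    (hf : DifferentiableAt ℝ (fun p : E × ℝ => f p.1 p.2) (γ t, t)) (hγ : HasDerivAt γ v t) :
    HasDerivAt (fun s => f (γ s) s)
      (inner ℝ (gradient (fun y => f y t) (γ t)) v + deriv (fun s => f (γ t) s) t) t := by
  obtain ⟨L, hL⟩ := hf
  have total : HasDerivAt (fun s => f (γ s) s) (L (v, 1)) t :=
    hL.comp_hasDerivAt (f := fun s => (γ s, s)) t (hγ.prodMk (hasDerivAt_id t))
  have temporal : HasDerivAt (fun s => f (γ t) s) (L (0, 1)) t :=
    hL.comp_hasDerivAt (f := fun s => (γ t, s)) t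
      ((hasDerivAt_const t (γ t)).prodMk (hasDerivAt_id t))
  have spatial : HasFDerivAt (fun y => f y t) (L.comp (.inl ℝ E ℝ)) (γ t) :=
    hL.comp (f := fun y => (y, t)) (γ t) (hasFDerivAt_prodMk_left (γ t) t)
  have inner_gradient : inner ℝ (gradient (fun y => f y t) (γ t)) v = L (v, 0) := by
    simp [gradient, spatial.fderiv]
  have split : L (v, 1) = L (v, 0) + L (0, 1) := by simp [← map_add]
  rwa [inner_gradient, temporal.deriv, ← split]

lemma neg_mul_integral_norm_sq_sub_le_sub_along_path {a t₁ t₂ : ℝ} {Q q : ℝ → ℝ}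
    (ha : 0 < a) (ht : t₁ ≤ t₂)
    (hf : ∀ t ∈ Icc t₁ t₂, DifferentiableAt ℝ (fun p : E × ℝ => f p.1 p.2) (γ t, t))
    (hγ : ContinuousOn γ (Icc t₁ t₂)) (hγ' : ∀ t ∈ Ioo t₁ t₂, HasDerivAt γ (γ' t) t)
    (hint : IntervalIntegrable (fun t => ‖γ' t‖ ^ 2) MeasureTheory.volume t₁ t₂)
    (hQ : ContinuousOn Q (Icc t₁ t₂)) (hQ' : ∀ t ∈ Ioo t₁ t₂, HasDerivAt Q (q t) t)
    (hineq : ∀ t ∈ Ioo t₁ t₂,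
      ‖gradient (fun y => f y t) (γ t)‖ ^ 2 / a - q t ≤ deriv (fun s => f (γ t) s) t) :
    -(a / 4) * (∫ t in t₁..t₂, ‖γ' t‖ ^ 2) - (Q t₂ - Q t₁) ≤ f (γ t₂) t₂ - f (γ t₁) t₁ := by
  have continuousOn_path : ContinuousOn (fun t => f (γ t) t) (Icc t₁ t₂) := fun t ht =>
    (hf t ht).continuousAt.comp_continuousWithinAt (f := fun s => (γ s, s))
      ((hγ t ht).prodMk continuousWithinAt_id)
  have deriv_lower_bound : ∀ t ∈ Ioo t₁ t₂, -(a / 4) * ‖γ' t‖ ^ 2 ≤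
      inner ℝ (gradient (fun y => f y t) (γ t)) (γ' t) + deriv (fun s => f (γ t) s) t + q t :=
    fun t ht => by
      linarith [hineq t ht, neg_mul_norm_sq_le_inner_add_norm_sq_div ha
        (gradient (fun y => f y t) (γ t)) (γ' t)]
  have integrated := intervalIntegral.integral_le_sub_of_hasDeriv_right_of_le
    ht (continuousOn_path.add hQ)
    (fun t ht => ((hasDerivAt_along_path (hf t (Ioo_subset_Icc_self ht)) (hγ' t ht)).add
      (hQ' t ht)).hasDerivWithinAt)
    ((intervalIntegrable_iff_integrableOn_Icc_of_le ht).1 (hint.const_mul _))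
    deriv_lower_bound
  rw [intervalIntegral.integral_const_mul] at integrated
  simp only [Pi.add_apply] at integrated
  linarith

end InnerProductSpace

lemma mul_rpow_mul_exp_le_iff {a b r : ℝ} (ha : 0 < a) (hb : 0 < b) (hr : 0 < r) (p s : ℝ) :
    a * r ^ p * Real.exp s ≤ b ↔ Real.log a + p * Real.log r + s ≤ Real.log b := by
  rw [← Real.log_le_log_iff (by positivity) hb, Real.log_mul (by positivity) (by positivity),
    Real.log_mul ha.ne' (by positivity), Real.log_rpow hr, Real.log_exp]

theorem harnack_integration_lemma_general {E : Type*} [NormedAddCommGroup E]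
    [InnerProductSpace ℝ E] [CompleteSpace E] {A₁ A₂ A₃ t₁ t₂ : ℝ} {u : E → ℝ → ℝ} {γ γ' : ℝ → E}
    (hA₁ : 0 < A₁) (ht₁ : 0 < t₁) (ht₁₂ : t₁ ≤ t₂)
    (hu : ∀ t ∈ Icc t₁ t₂, DifferentiableAt ℝ (fun p : E × ℝ => u p.1 p.2) (γ t, t))
    (hupos : ∀ t ∈ Icc t₁ t₂, 0 < u (γ t) t)
    (hf : ∀ t ∈ Ioo t₁ t₂, deriv (fun s => Real.log (u (γ t) s)) t ≥
      (1 / A₁) * (‖gradient (fun y => Real.log (u y t)) (γ t)‖ ^ 2 - A₂ - A₃ / t))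
    (hγ : ContinuousOn γ (Icc t₁ t₂)) (hγ' : ∀ t ∈ Ioo t₁ t₂, HasDerivAt γ (γ' t) t)
    (hint : IntervalIntegrable (fun t => ‖γ' t‖ ^ 2) MeasureTheory.volume t₁ t₂) :
    u (γ t₂) t₂ ≥ u (γ t₁) t₁ * (t₂ / t₁) ^ (-(A₃ / A₁)) *
      Real.exp (-(A₁ / 4) * (∫ t in t₁..t₂, ‖γ' t‖ ^ 2) - (A₂ / A₁) * (t₂ - t₁)) := by
  have ht₂ : 0 < t₂ := ht₁.trans_le ht₁₂
  have hQ' : ∀ t ∈ Icc t₁ t₂, HasDerivAt (fun s => A₂ / A₁ * s + A₃ / A₁ * Real.log s)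
      (A₂ / A₁ * 1 + A₃ / A₁ * t⁻¹) t := fun t ht =>
    ((hasDerivAt_id t).const_mul _).add
      ((Real.hasDerivAt_log (ht₁.trans_le ht.1).ne').const_mul _)
  have hineq : ∀ t ∈ Ioo t₁ t₂, ‖gradient (fun y => Real.log (u y t)) (γ t)‖ ^ 2 / A₁ -
      (A₂ / A₁ * 1 + A₃ / A₁ * t⁻¹) ≤ deriv (fun s => Real.log (u (γ t) s)) t := fun t ht =>
    (hf t ht).trans_eq' (by ring)
  have log_growth := neg_mul_integral_norm_sq_sub_le_sub_along_path
    (f := fun x t => Real.log (u x t)) hA₁ ht₁₂ (fun t ht => (hu t ht).log (hupos t ht).ne')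
    hγ hγ' hint (fun t ht => (hQ' t ht).continuousAt.continuousWithinAt)
    (fun t ht => hQ' t (Ioo_subset_Icc_self ht)) hineq
  rw [ge_iff_le, mul_rpow_mul_exp_le_iff (hupos t₁ (left_mem_Icc.2 ht₁₂))
    (hupos t₂ (right_mem_Icc.2 ht₁₂)) (div_pos ht₂ ht₁), Real.log_div ht₂.ne' ht₁.ne']
  linarith

/-- The Harnack integration lemma (Lemma 3.1) on static Euclidean space: if
`f = log u` satisfies `∂f/∂t ≥ (1/A₁)(‖∇f‖² − A₂ − A₃/t)` on `ℝⁿ × (0, T]`, then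
along any C¹ path `γ` joining `(x₁, t₁)` to `(x₂, t₂)` one has
`u(x₂,t₂) ≥ u(x₁,t₁)·(t₂/t₁)^{−A₃/A₁}·exp(−(A₁/4)∫‖γ'‖² − (A₂/A₁)(t₂−t₁))`. -/
theorem harnack_integration_lemma (n : ℕ) (hn : 1 ≤ n) (T A₁ A₂ A₃ : ℝ)
    (hT : 0 < T) (hA₁ : 0 < A₁) (hA₂ : 0 < A₂) (hA₃ : 0 < A₃)
    (u : EuclideanSpace ℝ (Fin n) → ℝ → ℝ)
    (hu : ContDiff ℝ (⊤ : ℕ∞) (fun p : EuclideanSpace ℝ (Fin n) × ℝ => u p.1 p.2))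
    (hupos : ∀ x, ∀ t ∈ Set.Ioc 0 T, 0 < u x t)
    (hf : ∀ x, ∀ t ∈ Set.Ioc 0 T,
      deriv (fun s => Real.log (u x s)) t ≥
        (1 / A₁) * (‖gradient (fun y => Real.log (u y t)) x‖ ^ 2 - A₂ - A₃ / t))
    (t₁ t₂ : ℝ) (ht₁ : 0 < t₁) (ht₁₂ : t₁ < t₂) (ht₂ : t₂ ≤ T)
    (x₁ x₂ : EuclideanSpace ℝ (Fin n))
    (γ γ' : ℝ → EuclideanSpace ℝ (Fin n))
    (hγ : ∀ t ∈ Set.Icc t₁ t₂, HasDerivAt γ (γ' t) t)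
    (hγ' : ContinuousOn γ' (Set.Icc t₁ t₂))
    (hγ₁ : γ t₁ = x₁) (hγ₂ : γ t₂ = x₂) :
    u x₂ t₂ ≥ u x₁ t₁ * (t₂ / t₁) ^ (-(A₃ / A₁)) *
      Real.exp (-(A₁ / 4) * (∫ t in t₁..t₂, ‖γ' t‖ ^ 2) - (A₂ / A₁) * (t₂ - t₁)) := by
  subst hγ₁ hγ₂
  have hmem : ∀ t ∈ Icc t₁ t₂, t ∈ Ioc 0 T := fun t ht => ⟨ht₁.trans_le ht.1, ht.2.trans ht₂⟩
  exact harnack_integration_lemma_general hA₁ ht₁ ht₁₂.le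
    (fun t _ => hu.differentiable (by simp) (γ t, t)) (fun t ht => hupos _ t (hmem t ht))
    (fun t ht => hf _ t (hmem t (Ioo_subset_Icc_self ht)))
    (fun t ht => (hγ t ht).continuousAt.continuousWithinAt)
    (fun t ht => hγ t (Ioo_subset_Icc_self ht))
    ((hγ'.norm.pow 2).intervalIntegrable_of_Icc ht₁₂.le)
end

section
/- Let n ≥ 1, T > 0 and β ≥ 1. Let u : ℝⁿ × [0,T] → (0,∞) be a smooth positive function satisfying the heat equation ∂u/∂t = Δu, set f = log u, and define F(x,t) = t·(‖∇f(x,t)‖² − β·∂f/∂t(x,t)). Then for all real numbers a, b > 0 with a + 2b = 1/β, the inequality ΔF − ∂F/∂t ≥ −2⟨∇f, ∇F⟩ + (2aβt/n)·(‖∇f‖² − ∂f/∂t)² − (‖∇f‖² − β·∂f/∂t) holds at every point of ℝⁿ × (0,T]. -/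
open scoped RealInnerProductSpace

/-- The Euclidean Laplacian of `f : ℝⁿ → ℝ` at `x`: the trace of the Hessian,
computed as the sum of the second partial derivatives in the coordinate directions. -/
noncomputable def laplacian {n : ℕ} (f : EuclideanSpace ℝ (Fin n) → ℝ)
    (x : EuclideanSpace ℝ (Fin n)) : ℝ :=
  ∑ i, fderiv ℝ (fun y => fderiv ℝ f y (EuclideanSpace.single i 1)) x
    (EuclideanSpace.single i 1)

/-!
Write `f = log u`, so that `∂ₜf = Δf + ‖∇f‖²`, and let `L h = Δh - ∂ₜh + 2⟨∇f, ∇h⟩` be the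
linearization of this equation at `f`. As the equation is invariant under translations in space and
time, `L` annihilates every first derivative of `f`. Moreover `L` is a diffusion operator,
`L (h k) = h L k + k L h + 2⟨∇h, ∇k⟩`, whence `L ‖∇f‖² = ∑ᵢ L (∂ᵢf)² = 2‖∇²f‖²`. With `L t = -1`
this yields `L F = 2t‖∇²f‖² - (‖∇f‖² - β ∂ₜf)`, and `(Δf)² ≤ n‖∇²f‖²` finishes the proof.
-/

open Filter Topology

section DirectionalDerivative

variable {V : Type*} [NormedAddCommGroup V] [NormedSpace ℝ V]

/-- The derivative of `g` in the constant direction `v`, as a function of the base point so that it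
can be iterated. -/
noncomputable def dirDeriv (v : V) (g : V → ℝ) : V → ℝ :=
  fun p => fderiv ℝ g p v

variable {g h : V → ℝ} {p : V}

theorem contDiffAt_dirDeriv {m k : WithTop ℕ∞} (hg : ContDiffAt ℝ k g p) (hmk : m + 1 ≤ k)
    (v : V) : ContDiffAt ℝ m (dirDeriv v g) p :=
  (hg.fderiv_right hmk).clm_apply contDiffAt_const

theorem differentiableAt_dirDeriv (hg : ContDiffAt ℝ 2 g p) (v : V) :
    DifferentiableAt ℝ (dirDeriv v g) p :=
  (contDiffAt_dirDeriv (m := 1) hg (by norm_num) v).differentiableAt one_ne_zero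

theorem eventually_differentiableAt_of_contDiffAt {k : WithTop ℕ∞} (hg : ContDiffAt ℝ k g p)
    (hk : 1 ≤ k) : ∀ᶠ q in 𝓝 p, DifferentiableAt ℝ g q :=
  ((hg.of_le hk).eventually (by simp)).mono fun _ hq => hq.differentiableAt one_ne_zero

theorem dirDeriv_eventuallyEq (hgh : g =ᶠ[𝓝 p] h) (v : V) :
    dirDeriv v g =ᶠ[𝓝 p] dirDeriv v h :=
  hgh.fderiv.mono fun _ hq => DFunLike.congr_fun hq v

theorem dirDeriv_smul (c : ℝ) (v : V) (g : V → ℝ) (p : V) :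
    dirDeriv (c • v) g p = c * dirDeriv v g p :=
  map_smul (fderiv ℝ g p) c v

theorem dirDeriv_clm (ℓ : V →L[ℝ] ℝ) (v : V) : dirDeriv v ℓ = fun _ => ℓ v := by
  ext p
  simp only [dirDeriv, ℓ.fderiv]

theorem dirDeriv_const (c : ℝ) (v : V) : dirDeriv v (fun _ => c) = 0 := by
  ext p
  simp [dirDeriv]

theorem dirDeriv_add (hg : DifferentiableAt ℝ g p) (hh : DifferentiableAt ℝ h p) (v : V) :
    dirDeriv v (fun q => g q + h q) p = dirDeriv v g p + dirDeriv v h p := by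
  simp only [dirDeriv, fderiv_fun_add hg hh, add_apply]

theorem dirDeriv_sub (hg : DifferentiableAt ℝ g p) (hh : DifferentiableAt ℝ h p) (v : V) :
    dirDeriv v (fun q => g q - h q) p = dirDeriv v g p - dirDeriv v h p := by
  simp only [dirDeriv, fderiv_fun_sub hg hh, sub_apply]

theorem dirDeriv_sum {ι : Type*} [Fintype ι] {g : ι → V → ℝ}
    (hg : ∀ i, DifferentiableAt ℝ (g i) p) (v : V) :
    dirDeriv v (fun q => ∑ i, g i q) p = ∑ i, dirDeriv v (g i) p := by
  simp only [dirDeriv, fderiv_fun_sum fun i _ => hg i, sum_apply]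

theorem dirDeriv_mul (hg : DifferentiableAt ℝ g p) (hh : DifferentiableAt ℝ h p) (v : V) :
    dirDeriv v (fun q => g q * h q) p = g p * dirDeriv v h p + h p * dirDeriv v g p := by
  simp only [dirDeriv, fderiv_fun_mul hg hh, add_apply, smul_apply, smul_eq_mul]

theorem mul_dirDeriv_log (hg : DifferentiableAt ℝ g p) (hp : g p ≠ 0) (v : V) :
    g p * dirDeriv v (fun q => Real.log (g q)) p = dirDeriv v g p := by
  simp only [dirDeriv, fderiv.log hg hp, smul_apply, smul_eq_mul, mul_inv_cancel_left₀ hp]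

theorem dirDeriv_comm (hg : ContDiffAt ℝ 2 g p) (v w : V) :
    dirDeriv v (dirDeriv w g) p = dirDeriv w (dirDeriv v g) p := by
  have hfderiv : DifferentiableAt ℝ (fderiv ℝ g) p :=
    (hg.fderiv_right (m := 1) (by norm_num)).differentiableAt one_ne_zero
  have second_fderiv (v w : V) : dirDeriv v (dirDeriv w g) p = fderiv ℝ (fderiv ℝ g) p v w := by
    unfold dirDeriv
    simp [fderiv_clm_apply hfderiv (differentiableAt_const w)]
  rw [second_fderiv, second_fderiv]
  exact hg.isSymmSndFDerivAt (by simp) v w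

theorem dirDeriv_eq_of_eqOn {s : Set V} (hs : UniqueDiffWithinAt ℝ s p) (hp : p ∈ s)
    (hg : DifferentiableAt ℝ g p) (hh : DifferentiableAt ℝ h p) (hgh : Set.EqOn g h s) (v : V) :
    dirDeriv v g p = dirDeriv v h p := by
  unfold dirDeriv
  rw [← hg.fderivWithin hs, ← hh.fderivWithin hs, fderivWithin_congr' hgh hp]

end DirectionalDerivative

section ConstantFrame

variable {V ι : Type*} [NormedAddCommGroup V] [NormedSpace ℝ V] [Fintype ι]

/-- The sum of the second derivatives of `g` along the vectors `e i`: the spatial Laplacian when `e`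
is an orthonormal frame of the space directions of a space-time `V`. -/
noncomputable def frameLaplacian (e : ι → V) (g : V → ℝ) (p : V) : ℝ :=
  ∑ i, dirDeriv (e i) (dirDeriv (e i) g) p

/-- The inner product of the gradients of `g` and `h` along the frame `e`. -/
noncomputable def frameGradInner (e : ι → V) (g h : V → ℝ) (p : V) : ℝ :=
  ∑ i, dirDeriv (e i) g p * dirDeriv (e i) h p

/-- The squared Hilbert–Schmidt norm of the Hessian of `g` along the frame `e`. -/
noncomputable def frameHessianNormSq (e : ι → V) (g : V → ℝ) (p : V) : ℝ :=
  ∑ i, frameGradInner e (dirDeriv (e i) g) (dirDeriv (e i) g) p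

variable {e : ι → V} {g h : V → ℝ} {p : V}

theorem differentiableAt_frameLaplacian (hg : ContDiffAt ℝ 3 g p) :
    DifferentiableAt ℝ (frameLaplacian e g) p :=
  DifferentiableAt.fun_sum fun i _ =>
    differentiableAt_dirDeriv (contDiffAt_dirDeriv hg (by norm_num) (e i)) (e i)

theorem differentiableAt_frameGradInner (hg : ContDiffAt ℝ 2 g p) (hh : ContDiffAt ℝ 2 h p) :
    DifferentiableAt ℝ (frameGradInner e g h) p :=
  DifferentiableAt.fun_sum fun i _ =>
    (differentiableAt_dirDeriv hg (e i)).mul (differentiableAt_dirDeriv hh (e i))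

theorem dirDeriv_frameLaplacian (hg : ContDiffAt ℝ 3 g p) (v : V) :
    dirDeriv v (frameLaplacian e g) p = frameLaplacian e (dirDeriv v g) p := by
  have hDg (w : V) : ContDiffAt ℝ 2 (dirDeriv w g) p := contDiffAt_dirDeriv hg (by norm_num) w
  have hcomm (i : ι) : dirDeriv v (dirDeriv (e i) g) =ᶠ[𝓝 p] dirDeriv (e i) (dirDeriv v g) :=
    (hg.eventually (by simp)).mono fun q hq => dirDeriv_comm (hq.of_le (by norm_num)) v (e i)
  calc dirDeriv v (frameLaplacian e g) p
      = ∑ i, dirDeriv v (dirDeriv (e i) (dirDeriv (e i) g)) p :=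
        dirDeriv_sum (fun i => differentiableAt_dirDeriv (hDg (e i)) (e i)) v
    _ = ∑ i, dirDeriv (e i) (dirDeriv v (dirDeriv (e i) g)) p :=
        Finset.sum_congr rfl fun i _ => dirDeriv_comm (hDg (e i)) v (e i)
    _ = frameLaplacian e (dirDeriv v g) p :=
        Finset.sum_congr rfl fun i _ => (dirDeriv_eventuallyEq (hcomm i) (e i)).eq_of_nhds

theorem dirDeriv_frameGradInner_self (hg : ContDiffAt ℝ 2 g p) (v : V) :
    dirDeriv v (frameGradInner e g g) p = 2 * frameGradInner e g (dirDeriv v g) p := by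
  have hDg (i : ι) : DifferentiableAt ℝ (dirDeriv (e i) g) p := differentiableAt_dirDeriv hg (e i)
  unfold frameGradInner
  rw [dirDeriv_sum (fun i => (hDg i).fun_mul (hDg i)), Finset.mul_sum]
  refine Finset.sum_congr rfl fun i _ => ?_
  rw [dirDeriv_mul (hDg i) (hDg i), dirDeriv_comm hg v (e i)]
  ring

theorem dirDeriv_dirDeriv_mul (hg : ContDiffAt ℝ 2 g p) (hh : ContDiffAt ℝ 2 h p) (v : V) :
    dirDeriv v (dirDeriv v fun q => g q * h q) p =
      g p * dirDeriv v (dirDeriv v h) p + h p * dirDeriv v (dirDeriv v g) p +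
        2 * (dirDeriv v g p * dirDeriv v h p) := by
  have hg₁ := hg.differentiableAt two_ne_zero
  have hh₁ := hh.differentiableAt two_ne_zero
  have hDg := differentiableAt_dirDeriv hg v
  have hDh := differentiableAt_dirDeriv hh v
  have hfirst : (dirDeriv v fun q => g q * h q) =ᶠ[𝓝 p]
      fun q => g q * dirDeriv v h q + h q * dirDeriv v g q := by
    filter_upwards [eventually_differentiableAt_of_contDiffAt hg one_le_two,
      eventually_differentiableAt_of_contDiffAt hh one_le_two] with q hgq hhq
    exact dirDeriv_mul hgq hhq v
  rw [(dirDeriv_eventuallyEq hfirst v).eq_of_nhds,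
    dirDeriv_add (hg₁.fun_mul hDh) (hh₁.fun_mul hDg), dirDeriv_mul hg₁ hDh, dirDeriv_mul hh₁ hDg]
  ring

theorem frameLaplacian_mul (hg : ContDiffAt ℝ 2 g p) (hh : ContDiffAt ℝ 2 h p) :
    frameLaplacian e (fun q => g q * h q) p =
      g p * frameLaplacian e h p + h p * frameLaplacian e g p + 2 * frameGradInner e g h p := by
  simp only [frameLaplacian, frameGradInner, dirDeriv_dirDeriv_mul hg hh, Finset.sum_add_distrib,
    Finset.mul_sum]

theorem frameLaplacian_sub (hg : ContDiffAt ℝ 2 g p) (hh : ContDiffAt ℝ 2 h p) :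
    frameLaplacian e (fun q => g q - h q) p = frameLaplacian e g p - frameLaplacian e h p := by
  have hfirst (v : V) : (dirDeriv v fun q => g q - h q) =ᶠ[𝓝 p]
      fun q => dirDeriv v g q - dirDeriv v h q := by
    filter_upwards [eventually_differentiableAt_of_contDiffAt hg one_le_two,
      eventually_differentiableAt_of_contDiffAt hh one_le_two] with q hgq hhq
    exact dirDeriv_sub hgq hhq v
  unfold frameLaplacian
  rw [← Finset.sum_sub_distrib]
  refine Finset.sum_congr rfl fun i _ => ?_
  rw [(dirDeriv_eventuallyEq (hfirst (e i)) (e i)).eq_of_nhds,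
    dirDeriv_sub (differentiableAt_dirDeriv hg (e i)) (differentiableAt_dirDeriv hh (e i))]

theorem frameLaplacian_sum {κ : Type*} [Fintype κ] {g : κ → V → ℝ}
    (hg : ∀ j, ContDiffAt ℝ 2 (g j) p) :
    frameLaplacian e (fun q => ∑ j, g j q) p = ∑ j, frameLaplacian e (g j) p := by
  have hfirst (v : V) : (dirDeriv v fun q => ∑ j, g j q) =ᶠ[𝓝 p]
      fun q => ∑ j, dirDeriv v (g j) q := by
    filter_upwards [eventually_all.2 fun j =>
      eventually_differentiableAt_of_contDiffAt (hg j) one_le_two] with q hq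
    exact dirDeriv_sum hq v
  unfold frameLaplacian
  rw [Finset.sum_comm]
  refine Finset.sum_congr rfl fun i _ => ?_
  rw [(dirDeriv_eventuallyEq (hfirst (e i)) (e i)).eq_of_nhds,
    dirDeriv_sum fun j => differentiableAt_dirDeriv (hg j) (e i)]

theorem sq_frameLaplacian_le (e : ι → V) (g : V → ℝ) (p : V) :
    frameLaplacian e g p ^ 2 ≤ Fintype.card ι * frameHessianNormSq e g p := by
  calc frameLaplacian e g p ^ 2
      ≤ Fintype.card ι * ∑ i, dirDeriv (e i) (dirDeriv (e i) g) p ^ 2 := sq_sum_le_card_mul_sum_sq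
    _ ≤ Fintype.card ι * frameHessianNormSq e g p := by
        unfold frameHessianNormSq frameGradInner
        gcongr with i
        rw [sq]
        exact Finset.single_le_sum
          (f := fun j => dirDeriv (e j) (dirDeriv (e i) g) p * dirDeriv (e j) (dirDeriv (e i) g) p)
          (fun j _ => mul_self_nonneg _) (Finset.mem_univ i)

theorem mul_frameLaplacian_log_add (hg : ContDiffAt ℝ 2 g p) (hp : g p ≠ 0) :
    g p * (frameLaplacian e (fun q => Real.log (g q)) p +
      frameGradInner e (fun q => Real.log (g q)) (fun q => Real.log (g q)) p) =
      frameLaplacian e g p := by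
  have hlog : ContDiffAt ℝ 2 (fun q => Real.log (g q)) p := hg.log hp
  have hfirst (v : V) : (fun q => g q * dirDeriv v (fun q => Real.log (g q)) q) =ᶠ[𝓝 p]
      dirDeriv v g := by
    filter_upwards [eventually_differentiableAt_of_contDiffAt hg one_le_two,
      hg.continuousAt.eventually_ne hp] with q hq hq0
    exact mul_dirDeriv_log hq hq0 v
  simp only [frameLaplacian, frameGradInner]
  rw [← Finset.sum_add_distrib, Finset.mul_sum]
  refine Finset.sum_congr rfl fun i _ => ?_
  rw [← (dirDeriv_eventuallyEq (hfirst (e i)) (e i)).eq_of_nhds,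
    dirDeriv_mul (hg.differentiableAt two_ne_zero) (differentiableAt_dirDeriv hlog (e i)),
    ← mul_dirDeriv_log (hg.differentiableAt two_ne_zero) hp (e i)]
  ring

theorem dirDeriv_log_eq_of_heat {τ : V} (hg : ContDiffAt ℝ 2 g p) (hp : g p ≠ 0)
    (hheat : dirDeriv τ g p = frameLaplacian e g p) :
    dirDeriv τ (fun q => Real.log (g q)) p =
      frameLaplacian e (fun q => Real.log (g q)) p +
        frameGradInner e (fun q => Real.log (g q)) (fun q => Real.log (g q)) p := by
  refine mul_left_cancel₀ hp ?_
  rw [mul_dirDeriv_log (hg.differentiableAt two_ne_zero) hp, hheat,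
    mul_frameLaplacian_log_add hg hp]

end ConstantFrame

section Linearization

variable {V ι : Type*} [NormedAddCommGroup V] [NormedSpace ℝ V] [Fintype ι]

/-- The linearization `h ↦ Δh - ∂h/∂τ + 2⟨∇g, ∇h⟩` at `g` of the equation `∂g/∂τ = Δg + ‖∇g‖²`
satisfied by the logarithm of a solution of the heat equation; here `Δ` and `∇` are taken along the
frame `e`, and `τ` is the time direction. -/
noncomputable def linearizedOp (e : ι → V) (τ : V) (g h : V → ℝ) (p : V) : ℝ :=
  frameLaplacian e h p - dirDeriv τ h p + 2 * frameGradInner e g h p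

/-- The Li–Yau quantity `‖∇g‖² - β ∂g/∂τ`. -/
noncomputable def liYau (e : ι → V) (τ : V) (β : ℝ) (g : V → ℝ) (p : V) : ℝ :=
  frameGradInner e g g p - β * dirDeriv τ g p

variable {e : ι → V} {τ : V} {g h k : V → ℝ} {p : V}

theorem contDiffAt_liYau (hg : ContDiffAt ℝ 3 g p) (β : ℝ) :
    ContDiffAt ℝ 2 (liYau e τ β g) p := by
  have hDg (v : V) : ContDiffAt ℝ 2 (dirDeriv v g) p := contDiffAt_dirDeriv hg (by norm_num) v
  exact (ContDiffAt.sum fun i _ => (hDg (e i)).mul (hDg (e i))).sub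
    (contDiffAt_const.mul (hDg τ))

theorem linearizedOp_congr (hhk : h =ᶠ[𝓝 p] k) :
    linearizedOp e τ g h p = linearizedOp e τ g k p := by
  have hfirst (v : V) : dirDeriv v h =ᶠ[𝓝 p] dirDeriv v k := dirDeriv_eventuallyEq hhk v
  have hsecond (v : V) := (dirDeriv_eventuallyEq (hfirst v) v).eq_of_nhds
  simp only [linearizedOp, frameLaplacian, frameGradInner, hsecond, (hfirst _).eq_of_nhds]

theorem linearizedOp_sub (hh : ContDiffAt ℝ 2 h p) (hk : ContDiffAt ℝ 2 k p) :
    linearizedOp e τ g (fun q => h q - k q) p =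
      linearizedOp e τ g h p - linearizedOp e τ g k p := by
  simp only [linearizedOp, frameLaplacian_sub hh hk, frameGradInner, mul_sub,
    dirDeriv_sub (hh.differentiableAt two_ne_zero) (hk.differentiableAt two_ne_zero),
    Finset.sum_sub_distrib]
  ring

theorem linearizedOp_sum {κ : Type*} [Fintype κ] {h : κ → V → ℝ}
    (hh : ∀ j, ContDiffAt ℝ 2 (h j) p) :
    linearizedOp e τ g (fun q => ∑ j, h j q) p = ∑ j, linearizedOp e τ g (h j) p := by
  simp only [linearizedOp, frameLaplacian_sum hh, frameGradInner,
    dirDeriv_sum fun j => (hh j).differentiableAt two_ne_zero, Finset.sum_add_distrib,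
    Finset.sum_sub_distrib, Finset.mul_sum]
  rw [Finset.sum_comm (s := Finset.univ (α := ι))]

theorem linearizedOp_mul (hh : ContDiffAt ℝ 2 h p) (hk : ContDiffAt ℝ 2 k p) :
    linearizedOp e τ g (fun q => h q * k q) p =
      h p * linearizedOp e τ g k p + k p * linearizedOp e τ g h p +
        2 * frameGradInner e h k p := by
  have hgrad : frameGradInner e g (fun q => h q * k q) p =
      h p * frameGradInner e g k p + k p * frameGradInner e g h p := by
    simp only [frameGradInner, Finset.mul_sum, ← Finset.sum_add_distrib]
    refine Finset.sum_congr rfl fun i _ => ?_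
    rw [dirDeriv_mul (hh.differentiableAt two_ne_zero) (hk.differentiableAt two_ne_zero)]
    ring
  simp only [linearizedOp, frameLaplacian_mul hh hk, hgrad,
    dirDeriv_mul (hh.differentiableAt two_ne_zero) (hk.differentiableAt two_ne_zero)]
  ring

theorem linearizedOp_clm_mul {ℓ : V →L[ℝ] ℝ} (hℓe : ∀ i, ℓ (e i) = 0) (hℓτ : ℓ τ = 1)
    (hh : ContDiffAt ℝ 2 h p) :
    linearizedOp e τ g (fun q => ℓ q * h q) p = ℓ p * linearizedOp e τ g h p - h p := by
  have hgrad (k : V → ℝ) : frameGradInner e k ℓ p = 0 ∧ frameGradInner e ℓ k p = 0 := by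
    simp [frameGradInner, dirDeriv_clm, hℓe]
  have hlap : frameLaplacian e ℓ p = 0 := by
    simp [frameLaplacian, dirDeriv_clm, dirDeriv_const]
  have hL : linearizedOp e τ g ℓ p = -1 := by
    simp [linearizedOp, hlap, hgrad, dirDeriv_clm, hℓτ]
  rw [linearizedOp_mul ℓ.contDiff.contDiffAt hh, hL, (hgrad h).2]
  ring

variable {s : Set V}

theorem linearizedOp_dirDeriv (hs : UniqueDiffWithinAt ℝ s p) (hp : p ∈ s)
    (hg : ContDiffAt ℝ 3 g p)
    (heq : Set.EqOn (dirDeriv τ g) (fun q => frameLaplacian e g q + frameGradInner e g g q) s)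
    (v : V) : linearizedOp e τ g (dirDeriv v g) p = 0 := by
  have hg₂ : ContDiffAt ℝ 2 g p := hg.of_le (by norm_num)
  have hlap : DifferentiableAt ℝ (frameLaplacian e g) p := differentiableAt_frameLaplacian hg
  have hgrad : DifferentiableAt ℝ (frameGradInner e g g) p :=
    differentiableAt_frameGradInner hg₂ hg₂
  have hderiv : dirDeriv τ (dirDeriv v g) p =
      frameLaplacian e (dirDeriv v g) p + 2 * frameGradInner e g (dirDeriv v g) p := by
    rw [dirDeriv_comm hg₂, dirDeriv_eq_of_eqOn hs hp (differentiableAt_dirDeriv hg₂ τ)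
      (hlap.fun_add hgrad) heq, dirDeriv_add hlap hgrad, dirDeriv_frameLaplacian hg,
      dirDeriv_frameGradInner_self hg₂]
  rw [linearizedOp, hderiv]
  ring

theorem linearizedOp_liYau (hs : UniqueDiffWithinAt ℝ s p) (hp : p ∈ s)
    (hg : ContDiffAt ℝ 3 g p)
    (heq : Set.EqOn (dirDeriv τ g) (fun q => frameLaplacian e g q + frameGradInner e g g q) s)
    (β : ℝ) : linearizedOp e τ g (liYau e τ β g) p = 2 * frameHessianNormSq e g p := by
  have hDg (v : V) : ContDiffAt ℝ 2 (dirDeriv v g) p := contDiffAt_dirDeriv hg (by norm_num) v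
  have hker (v : V) : linearizedOp e τ g (dirDeriv v g) p = 0 :=
    linearizedOp_dirDeriv hs hp hg heq v
  have hsq (i : ι) : linearizedOp e τ g (fun q => dirDeriv (e i) g q * dirDeriv (e i) g q) p =
      2 * frameGradInner e (dirDeriv (e i) g) (dirDeriv (e i) g) p := by
    rw [linearizedOp_mul (hDg (e i)) (hDg (e i)), hker]
    ring
  -- `β ∂g/∂τ` is itself a directional derivative, so it is annihilated as well.
  have hliYau : liYau e τ β g = fun q =>
      ∑ i, dirDeriv (e i) g q * dirDeriv (e i) g q - dirDeriv (β • τ) g q := by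
    ext q
    rw [liYau, frameGradInner, dirDeriv_smul]
  rw [hliYau, linearizedOp_sub (ContDiffAt.sum fun i _ => (hDg (e i)).mul (hDg (e i)))
    (hDg (β • τ)), linearizedOp_sum fun i => (hDg (e i)).mul (hDg (e i)), hker, sub_zero,
    frameHessianNormSq, Finset.mul_sum]
  exact Finset.sum_congr rfl fun i _ => hsq i

theorem le_linearizedOp_clm_mul_liYau [Nonempty ι] (hs : UniqueDiffWithinAt ℝ s p) (hp : p ∈ s)
    (hg : ContDiffAt ℝ 3 g p)
    (heq : Set.EqOn (dirDeriv τ g) (fun q => frameLaplacian e g q + frameGradInner e g g q) s)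
    {ℓ : V →L[ℝ] ℝ} (hℓe : ∀ i, ℓ (e i) = 0) (hℓτ : ℓ τ = 1) (hℓp : 0 ≤ ℓ p) (β : ℝ) :
    2 * ℓ p / Fintype.card ι * (frameGradInner e g g p - dirDeriv τ g p) ^ 2 - liYau e τ β g p ≤
      linearizedOp e τ g (fun q => ℓ q * liYau e τ β g q) p := by
  have hcard : (0 : ℝ) < Fintype.card ι := by exact_mod_cast Fintype.card_pos
  have hlap : frameGradInner e g g p - dirDeriv τ g p = -frameLaplacian e g p := by
    rw [heq hp]
    ring
  have htrace : frameLaplacian e g p ^ 2 / Fintype.card ι ≤ frameHessianNormSq e g p :=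
    (div_le_iff₀' hcard).2 (sq_frameLaplacian_le e g p)
  rw [linearizedOp_clm_mul hℓe hℓτ (contDiffAt_liYau hg β), linearizedOp_liYau hs hp hg heq, hlap,
    neg_sq]
  calc 2 * ℓ p / Fintype.card ι * frameLaplacian e g p ^ 2 - liYau e τ β g p
      = 2 * ℓ p * (frameLaplacian e g p ^ 2 / Fintype.card ι) - liYau e τ β g p := by ring
    _ ≤ 2 * ℓ p * frameHessianNormSq e g p - liYau e τ β g p := by gcongr
    _ = ℓ p * (2 * frameHessianNormSq e g p) - liYau e τ β g p := by ring

end Linearization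

section TimeSlice

theorem fderiv_slice {E F : Type*} [NormedAddCommGroup E] [NormedSpace ℝ E]
    [NormedAddCommGroup F] [NormedSpace ℝ F] {g : E × F → ℝ} {x : E} {t : F}
    (hg : DifferentiableAt ℝ g (x, t)) (v : E) :
    fderiv ℝ (fun y => g (y, t)) x v = dirDeriv (v, 0) g (x, t) := by
  have hslice : HasFDerivAt (fun y => g (y, t)) _ x :=
    hg.hasFDerivAt.comp x (hasFDerivAt_prodMk_left x t)
  simp [hslice.fderiv, dirDeriv]

theorem deriv_slice {E : Type*} [NormedAddCommGroup E] [NormedSpace ℝ E] {g : E × ℝ → ℝ}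
    {x : E} {t : ℝ} (hg : DifferentiableAt ℝ g (x, t)) :
    deriv (fun s => g (x, s)) t = dirDeriv (0, 1) g (x, t) := by
  have hslice : HasFDerivAt (fun s => g (x, s)) _ t :=
    hg.hasFDerivAt.comp t (hasFDerivAt_prodMk_right x t)
  simp [hslice.hasDerivAt.deriv, dirDeriv]

variable {n : ℕ}

/-- The `i`-th coordinate direction of space, as a direction of space-time. -/
noncomputable def spaceDir (i : Fin n) : EuclideanSpace ℝ (Fin n) × ℝ :=
  (EuclideanSpace.single i 1, 0)

variable {g h : EuclideanSpace ℝ (Fin n) × ℝ → ℝ} {x : EuclideanSpace ℝ (Fin n)} {t : ℝ}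

theorem laplacian_slice (hg : ContDiffAt ℝ 2 g (x, t)) :
    laplacian (fun y => g (y, t)) x = frameLaplacian spaceDir g (x, t) := by
  have hslice : ContinuousAt (fun y : EuclideanSpace ℝ (Fin n) => (y, t)) x := by fun_prop
  refine Finset.sum_congr rfl fun i _ => ?_
  have hfirst : (fun y => fderiv ℝ (fun z => g (z, t)) y (EuclideanSpace.single i 1)) =ᶠ[𝓝 x]
      fun y => dirDeriv (spaceDir i) g (y, t) := by
    filter_upwards [hslice.eventually
      (eventually_differentiableAt_of_contDiffAt hg one_le_two)] with y hy
    exact fderiv_slice hy _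
  rw [hfirst.fderiv_eq]
  exact fderiv_slice (differentiableAt_dirDeriv hg (spaceDir i)) _

theorem inner_gradient_slice (hg : DifferentiableAt ℝ g (x, t))
    (hh : DifferentiableAt ℝ h (x, t)) :
    ⟪gradient (fun y => g (y, t)) x, gradient (fun y => h (y, t)) x⟫ =
      frameGradInner spaceDir g h (x, t) := by
  rw [← (EuclideanSpace.basisFun (Fin n) ℝ).sum_inner_mul_inner]
  refine Finset.sum_congr rfl fun i _ => ?_
  rw [inner_gradient_left, inner_gradient_right, EuclideanSpace.basisFun_apply, fderiv_slice hg,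
    fderiv_slice hh]
  rfl

theorem norm_gradient_slice_sq (hg : DifferentiableAt ℝ g (x, t)) :
    ‖gradient (fun y => g (y, t)) x‖ ^ 2 = frameGradInner spaceDir g g (x, t) := by
  rw [← real_inner_self_eq_norm_sq, inner_gradient_slice hg hg]

end TimeSlice

theorem evolution_inequality_flat_general {n : ℕ} (hn : 1 ≤ n)
    {s : Set (EuclideanSpace ℝ (Fin n) × ℝ)} (hs : UniqueDiffOn ℝ s)
    {u : EuclideanSpace ℝ (Fin n) → ℝ → ℝ}
    (hu : ∀ p ∈ s, ContDiffAt ℝ 3 (fun q : EuclideanSpace ℝ (Fin n) × ℝ => u q.1 q.2) p)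
    (hupos : ∀ x t, (x, t) ∈ s → 0 < u x t)
    (hheat : ∀ x t, (x, t) ∈ s → deriv (fun r => u x r) t = laplacian (fun y => u y t) x)
    {f : EuclideanSpace ℝ (Fin n) → ℝ → ℝ} (hf : f = fun x t => Real.log (u x t))
    {F : EuclideanSpace ℝ (Fin n) → ℝ → ℝ} (β : ℝ)
    (hF : F = fun x t => t * (‖gradient (fun y => f y t) x‖ ^ 2 -
      β * deriv (fun r => f x r) t))
    {x : EuclideanSpace ℝ (Fin n)} {t : ℝ} (hxt : (x, t) ∈ s) (ht : 0 ≤ t) :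
    laplacian (fun y => F y t) x - deriv (fun r => F x r) t ≥
      -2 * ⟪gradient (fun y => f y t) x, gradient (fun y => F y t) x⟫ +
        (2 * t / n) *
          (‖gradient (fun y => f y t) x‖ ^ 2 - deriv (fun r => f x r) t) ^ 2 -
        (‖gradient (fun y => f y t) x‖ ^ 2 - β * deriv (fun r => f x r) t) := by
  have : NeZero n := ⟨by lia⟩
  let g : EuclideanSpace ℝ (Fin n) × ℝ → ℝ := fun q => f q.1 q.2
  let G : EuclideanSpace ℝ (Fin n) × ℝ → ℝ := fun q => F q.1 q.2
  have hg : ContDiffAt ℝ 3 g (x, t) := by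
    simpa only [g, hf] using (hu _ hxt).log (hupos x t hxt).ne'
  have hg₁ : DifferentiableAt ℝ g (x, t) := hg.differentiableAt three_ne_zero
  have hGliYau : G =ᶠ[𝓝 (x, t)]
      fun q => ContinuousLinearMap.snd ℝ _ ℝ q * liYau spaceDir (0, 1) β g q := by
    filter_upwards [eventually_differentiableAt_of_contDiffAt hg (by norm_num)] with q hq
    simp only [G, hF, liYau, ← norm_gradient_slice_sq hq, ← deriv_slice hq]
    rfl
  have hG : ContDiffAt ℝ 2 G (x, t) :=
    (contDiffAt_snd.mul (contDiffAt_liYau hg β)).congr_of_eventuallyEq hGliYau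
  have hG₁ : DifferentiableAt ℝ G (x, t) := hG.differentiableAt two_ne_zero
  have heq : Set.EqOn (dirDeriv (0, 1) g)
      (fun q => frameLaplacian spaceDir g q + frameGradInner spaceDir g g q) s := by
    rintro ⟨y, r⟩ hyr
    have huyr := (hu _ hyr).of_le (m := 2) (by norm_num)
    simp only [g, hf]
    refine dirDeriv_log_eq_of_heat huyr (hupos y r hyr).ne' ?_
    rw [← deriv_slice (huyr.differentiableAt two_ne_zero), ← laplacian_slice huyr, hheat y r hyr]
  have hmain := le_linearizedOp_clm_mul_liYau (hs _ hxt) hxt hg heq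
    (ℓ := ContinuousLinearMap.snd ℝ _ ℝ) (fun _ => rfl) rfl ht β
  rw [← linearizedOp_congr hGliYau, linearizedOp, liYau, ← laplacian_slice hG, ← deriv_slice hG₁,
    ← inner_gradient_slice hg₁ hG₁, ← norm_gradient_slice_sq hg₁, ← deriv_slice hg₁,
    Fintype.card_fin] at hmain
  simp only [g, G, ContinuousLinearMap.coe_snd'] at hmain
  linarith

/-- The key evolution inequality of Lemma 2.1 in the static Euclidean case: for a
positive solution `u` of the heat equation, `f = log u` and
`F = t(‖∇f‖² − β ∂f/∂t)`, one has, for all `a, b > 0` with `a + 2b = 1/β`,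
`ΔF − ∂F/∂t ≥ −2⟨∇f, ∇F⟩ + (2aβt/n)(‖∇f‖² − ∂f/∂t)² − (‖∇f‖² − β ∂f/∂t)`. -/
theorem evolution_inequality_flat (n : ℕ) (hn : 1 ≤ n) (T β : ℝ) (hT : 0 < T)
    (hβ : 1 ≤ β) (u : EuclideanSpace ℝ (Fin n) → ℝ → ℝ)
    (hu : ContDiff ℝ (⊤ : ℕ∞) (fun p : EuclideanSpace ℝ (Fin n) × ℝ => u p.1 p.2))
    (hupos : ∀ x, ∀ t ∈ Set.Icc 0 T, 0 < u x t)
    (hheat : ∀ x, ∀ t ∈ Set.Icc 0 T,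
      deriv (fun s => u x s) t = laplacian (fun y => u y t) x)
    (f : EuclideanSpace ℝ (Fin n) → ℝ → ℝ) (hf : f = fun x t => Real.log (u x t))
    (F : EuclideanSpace ℝ (Fin n) → ℝ → ℝ)
    (hF : F = fun x t => t * (‖gradient (fun y => f y t) x‖ ^ 2 -
      β * deriv (fun s => f x s) t)) :
    ∀ a b : ℝ, 0 < a → 0 < b → a + 2 * b = 1 / β →
      ∀ x, ∀ t ∈ Set.Ioc 0 T,
        laplacian (fun y => F y t) x - deriv (fun s => F x s) t ≥
          -2 * ⟪gradient (fun y => f y t) x, gradient (fun y => F y t) x⟫ +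
            (2 * a * β * t / n) *
              (‖gradient (fun y => f y t) x‖ ^ 2 - deriv (fun s => f x s) t) ^ 2 -
            (‖gradient (fun y => f y t) x‖ ^ 2 - β * deriv (fun s => f x s) t) := by
  intro a b _ hb hab x t ht
  have haβ : a * β ≤ 1 := by
    rw [← le_div_iff₀ (zero_lt_one.trans_le hβ)]
    linarith
  have hsharp := evolution_inequality_flat_general hn
    (uniqueDiffOn_univ.prod (uniqueDiffOn_Icc hT))
    (fun p _ => (hu.of_le (WithTop.coe_le_coe.2 le_top)).contDiffAt)
    (fun y r hr => hupos y r hr.2) (fun y r hr => hheat y r hr.2) hf β hF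
    (Set.mk_mem_prod (Set.mem_univ x) (Set.Ioc_subset_Icc_self ht)) ht.1.le
  have hcoeff : 2 * a * β * t ≤ 2 * t := by nlinarith [ht.1]
  refine hsharp.le.trans' ?_
  gcongr
end

section
/- Let n ≥ 1. There exists a constant C′ > 0 depending only on n with the following property: for every T > 0, every smooth positive function u : ℝⁿ × [0,T] → (0,∞) satisfying the heat equation ∂u/∂t = Δu, every β > 1, every x ∈ ℝⁿ and every t ∈ (0,T], one has ‖∇u(x,t)‖²/u(x,t)² − β·(∂u/∂t)(x,t)/u(x,t) ≤ C′·β²/t. -/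
/-!
Let `f = log u`, so that `∂ₜf = Δf + |∇f|²`. Every directional derivative of `f` solves the
linearization `(∂ₜ - Δ - 2∇f·∇) h = 0` of this equation, hence applying this operator to
`W = |∇f|² - β ∂ₜf` leaves only `-2|Hess f|²`. By Cauchy–Schwarz and
`β Δf = -(W + (β - 1)|∇f|²)` this is at most `-(W + (β - 1)|∇f|²)² / A` with `A = n β² / 2`.
The corresponding ordinary differential equation `θ' = -θ² / A` has the solution
`θ = A / (t - a)`, to which we add terms that blow up on the lateral and final boundaries of a
cylinder. At an interior maximum of `W` minus this barrier the maximum principle rules out a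
positive value, because the term `(β - 1)|∇f|²` absorbs the drift `2⟨∇f, ∇·⟩` of the barrier.
Exhausting space-time by such cylinders leaves `W ≤ A / t`.
-/

namespace LiYau

open Filter Set Topology

section DirectionalDerivative

variable {V : Type*} [NormedAddCommGroup V] [NormedSpace ℝ V] {F G : V → ℝ} {p : V}

/-- The derivative of `F` in the fixed direction `v`, as a function of the base point, so that it
can be iterated. It is `0` where `F` is not differentiable. -/
noncomputable def dirDeriv (v : V) (F : V → ℝ) (p : V) : ℝ := fderiv ℝ F p v

lemma contDiffAt_dirDeriv {m k : WithTop ℕ∞} (hF : ContDiffAt ℝ k F p) (hmk : m + 1 ≤ k) (v : V) :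
    ContDiffAt ℝ m (dirDeriv v F) p :=
  (hF.fderiv_right hmk).clm_apply contDiffAt_const

lemma dirDeriv_congr (h : F =ᶠ[𝓝 p] G) (v : V) : dirDeriv v F p = dirDeriv v G p := by
  rw [dirDeriv, dirDeriv, h.fderiv_eq]

lemma dirDeriv_const_mul (hF : DifferentiableAt ℝ F p) (c : ℝ) (v : V) :
    dirDeriv v (fun q ↦ c * F q) p = c * dirDeriv v F p := by
  simp [dirDeriv, fderiv_const_mul hF]

lemma dirDeriv_add (hF : DifferentiableAt ℝ F p) (hG : DifferentiableAt ℝ G p) (v : V) :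
    dirDeriv v (fun q ↦ F q + G q) p = dirDeriv v F p + dirDeriv v G p := by
  simp [dirDeriv, fderiv_fun_add hF hG]

lemma dirDeriv_sub (hF : DifferentiableAt ℝ F p) (hG : DifferentiableAt ℝ G p) (v : V) :
    dirDeriv v (fun q ↦ F q - G q) p = dirDeriv v F p - dirDeriv v G p := by
  simp [dirDeriv, fderiv_fun_sub hF hG]

lemma dirDeriv_mul (hF : DifferentiableAt ℝ F p) (hG : DifferentiableAt ℝ G p) (v : V) :
    dirDeriv v (fun q ↦ F q * G q) p = F p * dirDeriv v G p + dirDeriv v F p * G p := by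
  simp [dirDeriv, fderiv_fun_mul hF hG, mul_comm]

lemma dirDeriv_sum {ι : Type*} [Fintype ι] {F : ι → V → ℝ}
    (hF : ∀ i, DifferentiableAt ℝ (F i) p) (v : V) :
    dirDeriv v (fun q ↦ ∑ i, F i q) p = ∑ i, dirDeriv v (F i) p := by
  simp [dirDeriv, fderiv_fun_sum fun i _ ↦ hF i]

lemma dirDeriv_comp {φ : ℝ → ℝ} {φ' : ℝ} (hφ : HasDerivAt φ φ' (F p))
    (hF : DifferentiableAt ℝ F p) (v : V) :
    dirDeriv v (fun q ↦ φ (F q)) p = φ' * dirDeriv v F p := by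
  have hcomp : HasFDerivAt (fun q ↦ φ (F q)) (φ' • fderiv ℝ F p) p :=
    hφ.comp_hasFDerivAt p hF.hasFDerivAt
  simp [dirDeriv, hcomp.fderiv]

lemma eventually_differentiableAt (hF : ContDiffAt ℝ 2 F p) :
    ∀ᶠ q in 𝓝 p, DifferentiableAt ℝ F q :=
  (hF.eventually (by simp)).mono fun _ hq ↦ hq.differentiableAt two_ne_zero

lemma differentiableAt_dirDeriv (hF : ContDiffAt ℝ 2 F p) (v : V) :
    DifferentiableAt ℝ (dirDeriv v F) p :=
  (contDiffAt_dirDeriv (m := 1) hF (by norm_num) v).differentiableAt one_ne_zero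

lemma dirDeriv_comm (hF : ContDiffAt ℝ 2 F p) (v w : V) :
    dirDeriv v (dirDeriv w F) p = dirDeriv w (dirDeriv v F) p := by
  have hfderiv : DifferentiableAt ℝ (fderiv ℝ F) p :=
    (hF.fderiv_right (m := 1) (by norm_num)).differentiableAt one_ne_zero
  have eq_fderiv_fderiv (a b : V) : dirDeriv a (dirDeriv b F) p = fderiv ℝ (fderiv ℝ F) p a b := by
    change fderiv ℝ (fun q ↦ fderiv ℝ F q b) p a = _
    simp [fderiv_clm_apply hfderiv (differentiableAt_const b)]
  rw [eq_fderiv_fderiv, eq_fderiv_fderiv, (hF.isSymmSndFDerivAt (by simp)).eq]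

lemma dirDeriv_dirDeriv_add (hF : ContDiffAt ℝ 2 F p) (hG : ContDiffAt ℝ 2 G p) (v w : V) :
    dirDeriv v (dirDeriv w fun q ↦ F q + G q) p =
      dirDeriv v (dirDeriv w F) p + dirDeriv v (dirDeriv w G) p := by
  rw [← dirDeriv_add (differentiableAt_dirDeriv hF w) (differentiableAt_dirDeriv hG w)]
  refine dirDeriv_congr ?_ v
  filter_upwards [eventually_differentiableAt hF, eventually_differentiableAt hG]
    with q hFq hGq using dirDeriv_add hFq hGq w

lemma dirDeriv_dirDeriv_sub (hF : ContDiffAt ℝ 2 F p) (hG : ContDiffAt ℝ 2 G p) (v w : V) :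
    dirDeriv v (dirDeriv w fun q ↦ F q - G q) p =
      dirDeriv v (dirDeriv w F) p - dirDeriv v (dirDeriv w G) p := by
  rw [← dirDeriv_sub (differentiableAt_dirDeriv hF w) (differentiableAt_dirDeriv hG w)]
  refine dirDeriv_congr ?_ v
  filter_upwards [eventually_differentiableAt hF, eventually_differentiableAt hG]
    with q hFq hGq using dirDeriv_sub hFq hGq w

lemma dirDeriv_dirDeriv_const_mul (hF : ContDiffAt ℝ 2 F p) (c : ℝ) (v w : V) :
    dirDeriv v (dirDeriv w fun q ↦ c * F q) p = c * dirDeriv v (dirDeriv w F) p := by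
  rw [← dirDeriv_const_mul (differentiableAt_dirDeriv hF w)]
  refine dirDeriv_congr ?_ v
  filter_upwards [eventually_differentiableAt hF] with q hFq using dirDeriv_const_mul hFq c w

lemma dirDeriv_dirDeriv_sum {ι : Type*} [Fintype ι] {F : ι → V → ℝ}
    (hF : ∀ i, ContDiffAt ℝ 2 (F i) p) (v w : V) :
    dirDeriv v (dirDeriv w fun q ↦ ∑ i, F i q) p = ∑ i, dirDeriv v (dirDeriv w (F i)) p := by
  rw [← dirDeriv_sum fun i ↦ differentiableAt_dirDeriv (hF i) w]
  refine dirDeriv_congr ?_ v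
  filter_upwards [eventually_all.2 fun i ↦ eventually_differentiableAt (hF i)]
    with q hFq using dirDeriv_sum hFq w

lemma dirDeriv_dirDeriv_comp {φ φ' : ℝ → ℝ} {φ'' : ℝ}
    (hφ : ∀ᶠ y in 𝓝 (F p), HasDerivAt φ (φ' y) y) (hφ' : HasDerivAt φ' φ'' (F p))
    (hF : ContDiffAt ℝ 2 F p) (v : V) :
    dirDeriv v (dirDeriv v fun q ↦ φ (F q)) p =
      φ' (F p) * dirDeriv v (dirDeriv v F) p + φ'' * dirDeriv v F p ^ 2 := by
  have hFp : DifferentiableAt ℝ F p := hF.differentiableAt two_ne_zero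
  have chain : dirDeriv v (fun q ↦ φ (F q)) =ᶠ[𝓝 p] fun q ↦ φ' (F q) * dirDeriv v F q := by
    filter_upwards [eventually_differentiableAt hF, hF.continuousAt.eventually hφ]
      with q hFq hφq using dirDeriv_comp hφq hFq v
  rw [dirDeriv_congr chain, dirDeriv_mul (hφ'.differentiableAt.fun_comp' p hFp)
    (differentiableAt_dirDeriv hF v), dirDeriv_comp hφ' hFp]
  ring

lemma dirDeriv_eq_zero_of_isLocalMax (h : IsLocalMax F p) (v : V) : dirDeriv v F p = 0 := by
  simp [dirDeriv, h.fderiv_eq_zero]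

lemma hasDerivAt_comp_line {v : V} {s : ℝ} (hF : DifferentiableAt ℝ F (p + s • v)) :
    HasDerivAt (fun r : ℝ ↦ F (p + r • v)) (dirDeriv v F (p + s • v)) s := by
  have hline : HasDerivAt (fun r : ℝ ↦ p + r • v) v s := by
    simpa using ((hasDerivAt_id s).smul_const v).const_add p
  exact hF.hasFDerivAt.comp_hasDerivAt s hline

lemma deriv_deriv_nonpos_of_isLocalMax {g : ℝ → ℝ} {s : ℝ} (h : IsLocalMax g s)
    (hg : ContinuousAt g s) : deriv (deriv g) s ≤ 0 := by
  by_contra! hpos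
  have hmin : IsLocalMin g s := isLocalMin_of_deriv_deriv_pos hpos h.deriv_eq_zero hg
  have hconst : g =ᶠ[𝓝 s] fun _ ↦ g s := by
    filter_upwards [hmin, h] with r hle hge using le_antisymm hge hle
  simp [hconst.deriv.deriv_eq] at hpos

lemma dirDeriv_dirDeriv_nonpos_of_isLocalMax (hF : ContDiffAt ℝ 2 F p) (h : IsLocalMax F p)
    (v : V) : dirDeriv v (dirDeriv v F) p ≤ 0 := by
  have hline : Tendsto (fun r : ℝ ↦ p + r • v) (𝓝 0) (𝓝 p) :=
    Continuous.tendsto' (by fun_prop) 0 p (by simp)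
  have hderiv : deriv (fun r : ℝ ↦ F (p + r • v)) =ᶠ[𝓝 0] fun r ↦ dirDeriv v F (p + r • v) := by
    filter_upwards [hline.eventually (eventually_differentiableAt hF)]
      with r hr using (hasDerivAt_comp_line hr).deriv
  have hderiv₂ : deriv (deriv fun r : ℝ ↦ F (p + r • v)) 0 = dirDeriv v (dirDeriv v F) p := by
    rw [hderiv.deriv_eq, (hasDerivAt_comp_line (s := 0) _).deriv]
    all_goals simp [differentiableAt_dirDeriv hF v]
  rw [← hderiv₂]
  refine deriv_deriv_nonpos_of_isLocalMax ?_ ?_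
  · simpa [IsLocalMax, IsMaxFilter] using hline.eventually h
  · exact (hasDerivAt_comp_line (by simpa using hF.differentiableAt two_ne_zero)).continuousAt

end DirectionalDerivative

section Frame

variable {V ι : Type*} [NormedAddCommGroup V] [NormedSpace ℝ V] [Fintype ι]
  {e : ι → V} {τ : V} {f F G : V → ℝ} {p : V}

/-- The inner product `⟨∇F, ∇G⟩` of the gradients along the frame `e`. The frame is an arbitrary
finite family of vectors; in space-time it will consist of the spatial directions only. -/
noncomputable def gradInner (e : ι → V) (F G : V → ℝ) (p : V) : ℝ :=
  ∑ i, dirDeriv (e i) F p * dirDeriv (e i) G p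

/-- The Laplacian `∑ᵢ ∂ᵢ∂ᵢF` along the frame `e`. -/
noncomputable def frameLaplacian (e : ι → V) (F : V → ℝ) (p : V) : ℝ :=
  ∑ i, dirDeriv (e i) (dirDeriv (e i) F) p

/-- The heat operator with drift, `(∂_τ - Δ - 2⟨∇f, ∇·⟩) F`. This is the linearization at `f` of
the equation `∂_τ f = Δf + |∇f|²` satisfied by the logarithm of a solution of the heat equation. -/
noncomputable def driftHeat (e : ι → V) (τ : V) (f F : V → ℝ) (p : V) : ℝ :=
  dirDeriv τ F p - frameLaplacian e F p - 2 * gradInner e f F p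

/-- The Li–Yau quantity `|∇f|² - β ∂_τ f`, where `f` is the logarithm of a positive solution. -/
noncomputable def liYauQuantity (e : ι → V) (τ : V) (β : ℝ) (f : V → ℝ) (p : V) : ℝ :=
  gradInner e f f p - β * dirDeriv τ f p

lemma gradInner_self_nonneg : 0 ≤ gradInner e F F p :=
  Finset.sum_nonneg fun _ _ ↦ mul_self_nonneg _

lemma two_mul_gradInner_le {r : ℝ} (hr : 0 < r) :
    2 * gradInner e F G p ≤ r * gradInner e F F p + gradInner e G G p / r := by
  simp only [gradInner, Finset.mul_sum, Finset.sum_div, ← Finset.sum_add_distrib]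
  refine Finset.sum_le_sum fun i _ ↦ ?_
  have hsq := mul_nonneg (inv_nonneg.2 hr.le)
    (sq_nonneg (r * dirDeriv (e i) F p - dirDeriv (e i) G p))
  field_simp at hsq ⊢
  linarith

lemma contDiffAt_gradInner_self {m k : WithTop ℕ∞} (hF : ContDiffAt ℝ k F p) (hmk : m + 1 ≤ k) :
    ContDiffAt ℝ m (gradInner e F F) p :=
  ContDiffAt.sum fun i _ ↦
    (contDiffAt_dirDeriv hF hmk (e i)).mul (contDiffAt_dirDeriv hF hmk (e i))

lemma gradInner_comp {φ : ℝ → ℝ} {φ' : ℝ} (hφ : HasDerivAt φ φ' (F p))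
    (hF : DifferentiableAt ℝ F p) :
    gradInner e G (fun q ↦ φ (F q)) p = φ' * gradInner e G F p := by
  simp only [gradInner, dirDeriv_comp hφ hF, Finset.mul_sum]
  exact Finset.sum_congr rfl fun i _ ↦ by ring

lemma gradInner_comp_comp {φ : ℝ → ℝ} {φ' : ℝ} (hφ : HasDerivAt φ φ' (F p))
    (hF : DifferentiableAt ℝ F p) :
    gradInner e (fun q ↦ φ (F q)) (fun q ↦ φ (F q)) p = φ' ^ 2 * gradInner e F F p := by
  simp only [gradInner, dirDeriv_comp hφ hF, Finset.mul_sum]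
  exact Finset.sum_congr rfl fun i _ ↦ by ring

lemma frameLaplacian_add (hF : ContDiffAt ℝ 2 F p) (hG : ContDiffAt ℝ 2 G p) :
    frameLaplacian e (fun q ↦ F q + G q) p = frameLaplacian e F p + frameLaplacian e G p := by
  simp only [frameLaplacian, dirDeriv_dirDeriv_add hF hG, Finset.sum_add_distrib]

lemma frameLaplacian_comp {φ φ' : ℝ → ℝ} {φ'' : ℝ}
    (hφ : ∀ᶠ y in 𝓝 (F p), HasDerivAt φ (φ' y) y) (hφ' : HasDerivAt φ' φ'' (F p))
    (hF : ContDiffAt ℝ 2 F p) :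
    frameLaplacian e (fun q ↦ φ (F q)) p =
      φ' (F p) * frameLaplacian e F p + φ'' * gradInner e F F p := by
  simp only [frameLaplacian, gradInner, dirDeriv_dirDeriv_comp hφ hφ' hF, Finset.mul_sum,
    ← Finset.sum_add_distrib, pow_two]

lemma dirDeriv_frameLaplacian (hF : ContDiffAt ℝ 3 F p) (v : V) :
    dirDeriv v (frameLaplacian e F) p = frameLaplacian e (dirDeriv v F) p := by
  have hD (w : V) : ContDiffAt ℝ 2 (dirDeriv w F) p := contDiffAt_dirDeriv hF (by norm_num) w
  have swap (w : V) : dirDeriv v (dirDeriv w F) =ᶠ[𝓝 p] dirDeriv w (dirDeriv v F) :=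
    (hF.eventually (by simp)).mono fun q hq ↦ dirDeriv_comm (hq.of_le (by norm_num)) v w
  unfold frameLaplacian
  rw [dirDeriv_sum fun i ↦ differentiableAt_dirDeriv (hD (e i)) (e i)]
  refine Finset.sum_congr rfl fun i _ ↦ ?_
  rw [dirDeriv_comm (hD (e i)), dirDeriv_congr (swap (e i))]

lemma dirDeriv_gradInner_self (hF : ContDiffAt ℝ 2 F p) (v : V) :
    dirDeriv v (gradInner e F F) p = 2 * gradInner e F (dirDeriv v F) p := by
  have hD (w : V) : DifferentiableAt ℝ (dirDeriv w F) p := differentiableAt_dirDeriv hF w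
  unfold gradInner
  rw [dirDeriv_sum fun i ↦ (hD (e i)).fun_mul (hD (e i)), Finset.mul_sum]
  refine Finset.sum_congr rfl fun i _ ↦ ?_
  rw [dirDeriv_mul (hD _) (hD _), dirDeriv_comm hF v (e i)]
  ring

lemma sq_frameLaplacian_le_card_mul_sum :
    frameLaplacian e F p ^ 2 ≤
      Fintype.card ι * ∑ i, gradInner e (dirDeriv (e i) F) (dirDeriv (e i) F) p := by
  refine sq_sum_le_card_mul_sum_sq.trans ?_
  rw [Finset.card_univ]
  gcongr with i
  rw [pow_two]
  exact Finset.single_le_sum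
    (f := fun j ↦ dirDeriv (e j) (dirDeriv (e i) F) p * dirDeriv (e j) (dirDeriv (e i) F) p)
    (fun j _ ↦ mul_self_nonneg _) (Finset.mem_univ i)

lemma driftHeat_sub (hF : ContDiffAt ℝ 2 F p) (hG : ContDiffAt ℝ 2 G p) :
    driftHeat e τ f (fun q ↦ F q - G q) p = driftHeat e τ f F p - driftHeat e τ f G p := by
  simp only [driftHeat, frameLaplacian, gradInner, dirDeriv_dirDeriv_sub hF hG,
    dirDeriv_sub (hF.differentiableAt two_ne_zero) (hG.differentiableAt two_ne_zero),
    Finset.sum_sub_distrib, mul_sub]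
  ring

lemma driftHeat_const_mul (hF : ContDiffAt ℝ 2 F p) (c : ℝ) :
    driftHeat e τ f (fun q ↦ c * F q) p = c * driftHeat e τ f F p := by
  simp only [driftHeat, frameLaplacian, gradInner, dirDeriv_dirDeriv_const_mul hF,
    dirDeriv_const_mul (hF.differentiableAt two_ne_zero), mul_left_comm _ c, ← Finset.mul_sum]
  ring

lemma driftHeat_sum {κ : Type*} [Fintype κ] {F : κ → V → ℝ} (hF : ∀ k, ContDiffAt ℝ 2 (F k) p) :
    driftHeat e τ f (fun q ↦ ∑ k, F k q) p = ∑ k, driftHeat e τ f (F k) p := by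
  simp only [driftHeat, frameLaplacian, gradInner, dirDeriv_dirDeriv_sum hF,
    dirDeriv_sum fun k ↦ (hF k).differentiableAt two_ne_zero, Finset.sum_sub_distrib,
    Finset.mul_sum]
  congr 1
  · rw [Finset.sum_comm]
  · exact Finset.sum_comm

lemma driftHeat_mul_self (hF : ContDiffAt ℝ 2 F p) :
    driftHeat e τ f (fun q ↦ F q * F q) p =
      2 * F p * driftHeat e τ f F p - 2 * gradInner e F F p := by
  have hsq (y : ℝ) : HasDerivAt (fun y : ℝ ↦ y * y) (2 * y) y := by
    simpa [two_mul] using (hasDerivAt_id y).fun_mul (hasDerivAt_id y)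
  have htwo : HasDerivAt (fun y : ℝ ↦ 2 * y) 2 (F p) := by
    simpa using (hasDerivAt_id (F p)).const_mul 2
  have hFp : DifferentiableAt ℝ F p := hF.differentiableAt two_ne_zero
  rw [driftHeat, dirDeriv_comp (hsq (F p)) hFp, gradInner_comp (hsq (F p)) hFp,
    frameLaplacian_comp (Eventually.of_forall hsq) htwo hF, driftHeat]
  ring

lemma driftHeat_le_of_isLocalMax_sub (hF : ContDiffAt ℝ 2 F p) (hG : ContDiffAt ℝ 2 G p)
    (h : IsLocalMax (fun q ↦ F q - G q) p) : driftHeat e τ f G p ≤ driftHeat e τ f F p := by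
  rw [← sub_nonneg, ← driftHeat_sub hF hG]
  have hlap : frameLaplacian e (fun q ↦ F q - G q) p ≤ 0 :=
    Finset.sum_nonpos fun i _ ↦ dirDeriv_dirDeriv_nonpos_of_isLocalMax (hF.sub hG) h (e i)
  simpa [driftHeat, gradInner, dirDeriv_eq_zero_of_isLocalMax h] using hlap

lemma driftHeat_dirDeriv_eq_zero (hf : ContDiffAt ℝ 3 f p)
    (heq : dirDeriv τ f =ᶠ[𝓝 p] fun q ↦ frameLaplacian e f q + gradInner e f f q) (v : V) :
    driftHeat e τ f (dirDeriv v f) p = 0 := by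
  have hf₂ : ContDiffAt ℝ 2 f p := hf.of_le (by norm_num)
  have hD (w : V) : ContDiffAt ℝ 2 (dirDeriv w f) p := contDiffAt_dirDeriv hf (by norm_num) w
  have hlap : DifferentiableAt ℝ (frameLaplacian e f) p :=
    .fun_sum fun i _ ↦ differentiableAt_dirDeriv (hD (e i)) (e i)
  have hgrad : DifferentiableAt ℝ (gradInner e f f) p :=
    (contDiffAt_gradInner_self (m := 2) hf (by norm_num)).differentiableAt two_ne_zero
  have hlinearized := dirDeriv_congr heq v
  rw [dirDeriv_add hlap hgrad, dirDeriv_frameLaplacian hf, dirDeriv_gradInner_self hf₂,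
    dirDeriv_comm hf₂] at hlinearized
  rw [driftHeat, hlinearized]
  ring

lemma contDiffAt_liYauQuantity {β : ℝ} (hf : ContDiffAt ℝ 3 f p) :
    ContDiffAt ℝ 2 (liYauQuantity e τ β f) p := by
  have htwo_three : (2 + 1 : WithTop ℕ∞) ≤ 3 := by norm_num
  exact (contDiffAt_gradInner_self hf htwo_three).sub
    (contDiffAt_const.mul (contDiffAt_dirDeriv hf htwo_three τ))

-- All `∂ᵥf` solve the linearized equation, so only the squares in `|∇f|²` contribute.
lemma driftHeat_liYauQuantity {β : ℝ} (hf : ContDiffAt ℝ 3 f p)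
    (heq : dirDeriv τ f =ᶠ[𝓝 p] fun q ↦ frameLaplacian e f q + gradInner e f f q) :
    driftHeat e τ f (liYauQuantity e τ β f) p =
      -2 * ∑ i, gradInner e (dirDeriv (e i) f) (dirDeriv (e i) f) p := by
  have hD (w : V) : ContDiffAt ℝ 2 (dirDeriv w f) p := contDiffAt_dirDeriv hf (by norm_num) w
  have hsq (i : ι) : ContDiffAt ℝ 2 (fun q ↦ dirDeriv (e i) f q * dirDeriv (e i) f q) p :=
    (hD (e i)).mul (hD (e i))
  have hgrad : driftHeat e τ f (gradInner e f f) p =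
      ∑ i, driftHeat e τ f (fun q ↦ dirDeriv (e i) f q * dirDeriv (e i) f q) p :=
    driftHeat_sum hsq
  unfold liYauQuantity
  rw [driftHeat_sub (contDiffAt_gradInner_self hf (by norm_num)) (contDiffAt_const.mul (hD τ)),
    driftHeat_const_mul (hD τ), hgrad]
  simp only [driftHeat_mul_self (hD _), driftHeat_dirDeriv_eq_zero hf heq, mul_zero, zero_sub,
    sub_zero, Finset.sum_neg_distrib, neg_mul, Finset.mul_sum]

end Frame

section Barrier

lemma isCompact_sublevel_of_tendsto_atTop {X : Type*} [TopologicalSpace X] [T2Space X]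
    {S C : Set X} {Ψ : X → ℝ} (hC : IsCompact C) (hSC : S ⊆ C) (hΨ : ContinuousOn Ψ S)
    (hblowup : ∀ p ∈ C \ S, Tendsto Ψ (𝓝[S] p) atTop) (M : ℝ) :
    IsCompact {p ∈ S | Ψ p ≤ M} := by
  refine hC.of_isClosed_subset (isClosed_of_closure_subset fun p hp ↦ ?_) fun p hp ↦ hSC hp.1
  have hpC : p ∈ C := closure_minimal (fun q hq ↦ hSC hq.1) hC.isClosed hp
  have : (𝓝[{p ∈ S | Ψ p ≤ M}] p).NeBot := mem_closure_iff_nhdsWithin_neBot.1 hp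
  have hmono : 𝓝[{p ∈ S | Ψ p ≤ M}] p ≤ 𝓝[S] p := nhdsWithin_mono p fun q hq ↦ hq.1
  have hle : ∀ᶠ q in 𝓝[{p ∈ S | Ψ p ≤ M}] p, Ψ q ≤ M :=
    eventually_mem_nhdsWithin.mono fun q hq ↦ hq.2
  by_cases hpS : p ∈ S
  · exact ⟨hpS, le_of_tendsto ((hΨ p hpS).mono_left hmono) hle⟩
  · have hgt := ((hblowup p ⟨hpC, hpS⟩).mono_left hmono).eventually_gt_atTop M
    obtain ⟨q, hqgt, hqle⟩ := (hgt.and hle).exists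
    exact absurd hqle hqgt.not_ge

lemma exists_isLocalMax_sub_of_tendsto_atTop {X : Type*} [TopologicalSpace X] [T2Space X]
    {S C : Set X} {F Ψ : X → ℝ} (hS : IsOpen S) (hC : IsCompact C) (hSC : S ⊆ C)
    (hF : ContinuousOn F C) (hΨ : ContinuousOn Ψ S)
    (hblowup : ∀ p ∈ C \ S, Tendsto Ψ (𝓝[S] p) atTop) {x : X} (hx : x ∈ S) (hlt : Ψ x < F x) :
    ∃ p ∈ S, IsLocalMax (fun q ↦ F q - Ψ q) p ∧ Ψ p < F p := by
  obtain ⟨M, hM⟩ := hC.bddAbove_image hF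
  have mem_sublevel {q : X} (hq : q ∈ S) (hqlt : Ψ q < F q) : q ∈ {p ∈ S | Ψ p ≤ M} :=
    ⟨hq, hqlt.le.trans (hM (mem_image_of_mem F (hSC hq)))⟩
  obtain ⟨p, ⟨hpS, -⟩, hmax⟩ :=
    (isCompact_sublevel_of_tendsto_atTop hC hSC hΨ hblowup M).exists_isMaxOn
      ⟨x, mem_sublevel hx hlt⟩
      ((hF.mono hSC).sub hΨ |>.mono fun q hq ↦ hq.1)
  have hpos : 0 < F p - Ψ p := (sub_pos.2 hlt).trans_le (hmax (mem_sublevel hx hlt))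
  refine ⟨p, hpS, ?_, sub_pos.1 hpos⟩
  filter_upwards [hS.mem_nhds hpS] with q hq
  rcases lt_or_ge (Ψ q) (F q) with hqlt | hqge
  · exact hmax (mem_sublevel hq hqlt)
  · exact (sub_nonpos.2 hqge).trans hpos.le

variable {V ι : Type*} [NormedAddCommGroup V] [NormedSpace ℝ V] [Fintype ι]
  {e : ι → V} {τ : V} {A β : ℝ} {f Ψ : V → ℝ} {p : V}

/-- The differential inequality `ΔΨ + A/(2(β-1)) |∇Ψ|²/Ψ ≤ ∂_τ Ψ + Ψ²/A` that makes `Ψ` an upper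
barrier for the Li–Yau quantity of every `f`, whatever the drift `∇f`: the gradient term
absorbs `2⟨∇f, ∇Ψ⟩`. -/
def IsLiYauSupersolutionAt (e : ι → V) (τ : V) (A β : ℝ) (Ψ : V → ℝ) (p : V) : Prop :=
  frameLaplacian e Ψ p + A / (2 * (β - 1)) * (gradInner e Ψ Ψ p / Ψ p) ≤
    dirDeriv τ Ψ p + Ψ p ^ 2 / A

lemma mul_frameLaplacian_eq_of_logHeat
    (heq : dirDeriv τ f p = frameLaplacian e f p + gradInner e f f p) :
    β * frameLaplacian e f p = -(liYauQuantity e τ β f p + (β - 1) * gradInner e f f p) := by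
  rw [liYauQuantity, heq]
  ring

lemma driftHeat_liYauQuantity_le (hA : 0 < A) (hcard : Fintype.card ι * β ^ 2 ≤ 2 * A)
    (hf : ContDiffAt ℝ 3 f p)
    (heq : dirDeriv τ f =ᶠ[𝓝 p] fun q ↦ frameLaplacian e f q + gradInner e f f q) :
    driftHeat e τ f (liYauQuantity e τ β f) p ≤
      -((liYauQuantity e τ β f p + (β - 1) * gradInner e f f p) ^ 2 / A) := by
  rw [driftHeat_liYauQuantity hf heq, ← neg_sq (_ + _),
    ← mul_frameLaplacian_eq_of_logHeat heq.self_of_nhds, neg_mul, neg_le_neg_iff, div_le_iff₀ hA]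
  set H : ℝ := ∑ i, gradInner e (dirDeriv (e i) f) (dirDeriv (e i) f) p
  have hH : 0 ≤ H := Finset.sum_nonneg fun _ _ ↦ gradInner_self_nonneg
  calc (β * frameLaplacian e f p) ^ 2 = β ^ 2 * frameLaplacian e f p ^ 2 := mul_pow _ _ 2
    _ ≤ β ^ 2 * (Fintype.card ι * H) := by gcongr; exact sq_frameLaplacian_le_card_mul_sum
    _ = Fintype.card ι * β ^ 2 * H := by ring
    _ ≤ 2 * A * H := by gcongr
    _ = 2 * H * A := by ring

lemma le_driftHeat_of_isLiYauSupersolutionAt (hA : 0 < A) (hβ : 1 < β) (hΨ : 0 < Ψ p)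
    (hsuper : IsLiYauSupersolutionAt e τ A β Ψ p) :
    -((Ψ p ^ 2 + 2 * (β - 1) * Ψ p * gradInner e f f p) / A) ≤ driftHeat e τ f Ψ p := by
  have hβ₁ : 0 < β - 1 := sub_pos.2 hβ
  have hamgm := two_mul_gradInner_le (e := e) (F := f) (G := Ψ) (p := p)
    (r := 2 * (β - 1) * Ψ p / A) (by positivity)
  have habsorb : gradInner e Ψ Ψ p / (2 * (β - 1) * Ψ p / A) =
      A / (2 * (β - 1)) * (gradInner e Ψ Ψ p / Ψ p) := by field_simp
  rw [IsLiYauSupersolutionAt] at hsuper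
  rw [driftHeat, add_div, mul_div_right_comm]
  linarith

lemma not_isLocalMax_liYauQuantity_sub (hA : 0 < A) (hβ : 1 < β)
    (hcard : Fintype.card ι * β ^ 2 ≤ 2 * A) (hf : ContDiffAt ℝ 3 f p)
    (heq : dirDeriv τ f =ᶠ[𝓝 p] fun q ↦ frameLaplacian e f q + gradInner e f f q)
    (hΨ : ContDiffAt ℝ 2 Ψ p) (hΨ₀ : 0 < Ψ p) (hsuper : IsLiYauSupersolutionAt e τ A β Ψ p)
    (hlt : Ψ p < liYauQuantity e τ β f p) :
    ¬ IsLocalMax (fun q ↦ liYauQuantity e τ β f q - Ψ q) p := by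
  intro hmax
  have hsq : (liYauQuantity e τ β f p + (β - 1) * gradInner e f f p) ^ 2 ≤
      Ψ p ^ 2 + 2 * (β - 1) * Ψ p * gradInner e f f p := by
    rw [← div_le_div_iff_of_pos_right hA, ← neg_le_neg_iff]
    exact (le_driftHeat_of_isLiYauSupersolutionAt hA hβ hΨ₀ hsuper).trans <|
      (driftHeat_le_of_isLocalMax_sub (contDiffAt_liYauQuantity hf) hΨ hmax).trans
        (driftHeat_liYauQuantity_le hA hcard hf heq)
  have hgrad : 0 ≤ (β - 1) * gradInner e f f p :=
    mul_nonneg (sub_nonneg.2 hβ.le) gradInner_self_nonneg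
  nlinarith

theorem liYauQuantity_le_of_isLiYauSupersolutionAt {S C : Set V} (hA : 0 < A) (hβ : 1 < β)
    (hcard : Fintype.card ι * β ^ 2 ≤ 2 * A) (hS : IsOpen S) (hC : IsCompact C) (hSC : S ⊆ C)
    (hf : ∀ q ∈ C, ContDiffAt ℝ 3 f q)
    (heq : ∀ q ∈ S, dirDeriv τ f q = frameLaplacian e f q + gradInner e f f q)
    (hΨ : ∀ q ∈ S, ContDiffAt ℝ 2 Ψ q) (hΨ₀ : ∀ q ∈ S, 0 < Ψ q)
    (hsuper : ∀ q ∈ S, IsLiYauSupersolutionAt e τ A β Ψ q)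
    (hblowup : ∀ q ∈ C \ S, Tendsto Ψ (𝓝[S] q) atTop) (hp : p ∈ S) :
    liYauQuantity e τ β f p ≤ Ψ p := by
  by_contra! hlt
  have hcont : ContinuousOn (liYauQuantity e τ β f) C := fun q hq ↦
    (contDiffAt_liYauQuantity (hf q hq)).continuousAt.continuousWithinAt
  obtain ⟨q, hqS, hmax, hqlt⟩ := exists_isLocalMax_sub_of_tendsto_atTop hS hC hSC hcont
    (fun q hq ↦ (hΨ q hq).continuousAt.continuousWithinAt) hblowup hp hlt
  exact not_isLocalMax_liYauQuantity_sub hA hβ hcard (hf q (hSC hqS))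
    (eventually_of_mem (hS.mem_nhds hqS) heq) (hΨ q hqS) (hΨ₀ q hqS) (hsuper q hqS) hqlt hmax

end Barrier

section SpaceTime

variable {E ι : Type*} [NormedAddCommGroup E] {x₀ : E} {A ε a b K ρ : ℝ} {p : E × ℝ}

/-- The time direction of the space-time `E × ℝ`. -/
def timeDir : E × ℝ := (0, 1)

/-- The open space-time cylinder of radius `ρ` around `x₀` over the time interval `(a, b)`. -/
def cylinder (x₀ : E) (ρ a b : ℝ) : Set (E × ℝ) := Metric.ball x₀ ρ ×ˢ Ioo a b

/-- The function `(x, t) ↦ ρ² - ‖x - x₀‖²`, a smooth substitute for the distance to the lateral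
boundary of the cylinder of radius `ρ` around `x₀`. -/
noncomputable def radialDefect (x₀ : E) (ρ : ℝ) (p : E × ℝ) : ℝ := ρ ^ 2 - ‖p.1 - x₀‖ ^ 2

/-- The part of the barrier that blows up at the times `a` and `b`. The first summand is the
solution of `∂ₜθ = -θ²/A` starting from infinity at time `a`. -/
noncomputable def timeBarrier (A ε a b s : ℝ) : ℝ := A / (s - a) + ε / (b - s)

/-- The barrier on `cylinder x₀ ρ a b`. It blows up on the whole boundary of the cylinder. -/
noncomputable def cylinderBarrier (A ε a b K ρ : ℝ) (x₀ : E) (p : E × ℝ) : ℝ :=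
  timeBarrier A ε a b p.2 + K / radialDefect x₀ ρ p ^ 2

lemma radialDefect_pos (hp : p ∈ cylinder x₀ ρ a b) : 0 < radialDefect x₀ ρ p := by
  have hnorm : ‖p.1 - x₀‖ < ρ := mem_ball_iff_norm.1 hp.1
  exact sub_pos.2 (by gcongr)

lemma radialDefect_eq_zero (hp : p.1 ∈ Metric.sphere x₀ ρ) : radialDefect x₀ ρ p = 0 := by
  rw [radialDefect, mem_sphere_iff_norm.1 hp, sub_self]

lemma eq_or_mem_sphere_of_mem_diff_cylinder
    (hp : p ∈ (Metric.closedBall x₀ ρ ×ˢ Icc a b) \ cylinder x₀ ρ a b) :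
    p.2 = a ∨ p.2 = b ∨ p.1 ∈ Metric.sphere x₀ ρ := by
  obtain ⟨⟨hball, hIcc⟩, hnot⟩ := hp
  by_contra! hne
  exact hnot ⟨lt_of_le_of_ne hball hne.2.2, hIcc.1.lt_of_ne' hne.1, hIcc.2.lt_of_ne hne.2.1⟩

lemma add_le_cylinderBarrier (hε : 0 ≤ ε) (hp : p ∈ cylinder x₀ ρ a b) :
    A / (p.2 - a) + K / radialDefect x₀ ρ p ^ 2 ≤ cylinderBarrier A ε a b K ρ x₀ p := by
  have hend : 0 ≤ ε / (b - p.2) := div_nonneg hε (sub_pos.2 hp.2.2).le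
  rw [cylinderBarrier, timeBarrier]
  linarith

lemma tendsto_atTop_of_const_div_le {X : Type*} [TopologicalSpace X] {S : Set X} {g Ψ : X → ℝ}
    {x : X} {c : ℝ} (hc : 0 < c) (hg : ContinuousWithinAt g S x) (hgx : g x = 0)
    (hpos : ∀ y ∈ S, 0 < g y) (hle : ∀ y ∈ S, c / g y ≤ Ψ y) : Tendsto Ψ (𝓝[S] x) atTop := by
  have hzero : Tendsto g (𝓝[S] x) (𝓝[>] 0) :=
    tendsto_nhdsWithin_iff.2 ⟨hgx ▸ hg, eventually_mem_nhdsWithin.mono hpos⟩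
  have hdiv : Tendsto (fun y ↦ c / g y) (𝓝[S] x) atTop := by
    simpa only [div_eq_mul_inv, Function.comp_def] using
      (tendsto_inv_nhdsGT_zero.comp hzero).const_mul_atTop hc
  exact tendsto_atTop_mono' _ (eventually_mem_nhdsWithin.mono hle) hdiv

lemma continuous_radialDefect : Continuous (radialDefect x₀ ρ) := by
  unfold radialDefect
  fun_prop

lemma tendsto_cylinderBarrier_atTop (hA : 0 < A) (hε : 0 < ε) (hK : 0 < K)
    (hp : p ∈ (Metric.closedBall x₀ ρ ×ˢ Icc a b) \ cylinder x₀ ρ a b) :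
    Tendsto (cylinderBarrier A ε a b K ρ x₀) (𝓝[cylinder x₀ ρ a b] p) atTop := by
  have start_pos (q : E × ℝ) (hq : q ∈ cylinder x₀ ρ a b) : 0 < q.2 - a := sub_pos.2 hq.2.1
  have end_pos (q : E × ℝ) (hq : q ∈ cylinder x₀ ρ a b) : 0 < b - q.2 := sub_pos.2 hq.2.2
  have defect_pos (q : E × ℝ) (hq : q ∈ cylinder x₀ ρ a b) : 0 < radialDefect x₀ ρ q ^ 2 :=
    pow_pos (radialDefect_pos hq) 2
  have start_term_pos (q) (hq : q ∈ cylinder x₀ ρ a b) := div_pos hA (start_pos q hq)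
  have end_term_pos (q) (hq : q ∈ cylinder x₀ ρ a b) := div_pos hε (end_pos q hq)
  have defect_term_pos (q) (hq : q ∈ cylinder x₀ ρ a b) := div_pos hK (defect_pos q hq)
  rcases eq_or_mem_sphere_of_mem_diff_cylinder hp with hstart | hend | hlateral
  · refine tendsto_atTop_of_const_div_le hA (by fun_prop) (sub_eq_zero.2 hstart) start_pos
      fun q hq ↦ ?_
    rw [cylinderBarrier, timeBarrier]
    linarith [end_term_pos q hq, defect_term_pos q hq]
  · refine tendsto_atTop_of_const_div_le hε (by fun_prop) (sub_eq_zero.2 hend.symm) end_pos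
      fun q hq ↦ ?_
    rw [cylinderBarrier, timeBarrier]
    linarith [start_term_pos q hq, defect_term_pos q hq]
  · have hcont : Continuous fun q ↦ radialDefect x₀ ρ q ^ 2 := continuous_radialDefect.pow 2
    refine tendsto_atTop_of_const_div_le hK hcont.continuousWithinAt
      (by simp [radialDefect_eq_zero hlateral]) defect_pos fun q hq ↦ ?_
    rw [cylinderBarrier, timeBarrier]
    linarith [start_term_pos q hq, end_term_pos q hq]

variable [InnerProductSpace ℝ E]

lemma contDiff_radialDefect : ContDiff ℝ 2 (radialDefect x₀ ρ) := by
  have hnorm : ContDiff ℝ 2 fun p : E × ℝ ↦ ‖p.1 - x₀‖ ^ 2 :=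
    (contDiff_fst.sub contDiff_const).norm_sq ℝ
  exact contDiff_const.sub hnorm

lemma dirDeriv_radialDefect (v : E × ℝ) :
    dirDeriv v (radialDefect x₀ ρ) = fun p ↦ -2 * inner ℝ (p.1 - x₀) v.1 := by
  ext p
  have hderiv : HasFDerivAt (radialDefect x₀ ρ) _ p :=
    ((hasFDerivAt_fst (𝕜 := ℝ) (p := p)).sub_const x₀).norm_sq.const_sub (ρ ^ 2)
  simp [dirDeriv, hderiv.fderiv, inner_sub_left]

lemma dirDeriv_dirDeriv_radialDefect (v w : E × ℝ) :
    dirDeriv w (dirDeriv v (radialDefect x₀ ρ)) p = -2 * inner ℝ w.1 v.1 := by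
  have hderiv : HasFDerivAt (fun p : E × ℝ ↦ -2 * inner ℝ (p.1 - x₀) v.1) _ p :=
    (((hasFDerivAt_fst (𝕜 := ℝ) (p := p)).sub_const x₀).inner ℝ
      (hasFDerivAt_const v.1 p)).const_mul (-2)
  rw [dirDeriv_radialDefect, dirDeriv, hderiv.fderiv]
  simp

variable [Fintype ι] {o : OrthonormalBasis ι ℝ E}

/-- The spatial directions `(oᵢ, 0)` of the space-time `E × ℝ`. -/
noncomputable def spaceFrame (o : OrthonormalBasis ι ℝ E) (i : ι) : E × ℝ := (o i, 0)

lemma frameLaplacian_radialDefect :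
    frameLaplacian (spaceFrame o) (radialDefect x₀ ρ) p = -2 * Fintype.card ι := by
  simp [frameLaplacian, dirDeriv_dirDeriv_radialDefect, spaceFrame, mul_comm]

lemma gradInner_radialDefect :
    gradInner (spaceFrame o) (radialDefect x₀ ρ) (radialDefect x₀ ρ) p = 4 * ‖p.1 - x₀‖ ^ 2 := by
  rw [← o.sum_sq_inner_left (p.1 - x₀), Finset.mul_sum]
  refine Finset.sum_congr rfl fun i _ ↦ ?_
  rw [dirDeriv_radialDefect, spaceFrame]
  ring

lemma dirDeriv_comp_snd_eq_zero (θ : ℝ → ℝ) (w : E) :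
    dirDeriv (w, 0) (fun q : E × ℝ ↦ θ q.2) = 0 := by
  ext p
  by_cases hθ : DifferentiableAt ℝ (fun q : E × ℝ ↦ θ q.2) p
  · have hline := hasDerivAt_comp_line (p := p) (v := (w, 0)) (s := 0) (by simpa using hθ)
    simpa using hline.unique (by simpa using hasDerivAt_const (0 : ℝ) (θ p.2))
  · simp [dirDeriv, fderiv_zero_of_not_differentiableAt hθ]

lemma frameLaplacian_comp_snd_eq_zero (θ : ℝ → ℝ) :
    frameLaplacian (spaceFrame o) (fun q : E × ℝ ↦ θ q.2) p = 0 := by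
  refine Finset.sum_eq_zero fun i _ ↦ ?_
  rw [spaceFrame, dirDeriv_comp_snd_eq_zero]
  simp [dirDeriv]

lemma hasDerivAt_const_div_pow (k : ℕ) {y : ℝ} (hy : y ≠ 0) :
    HasDerivAt (fun y : ℝ ↦ K / y ^ k) (-k * K / y ^ (k + 1)) y := by
  have hexp : (-k - 1 : ℤ) = -((k + 1 : ℕ) : ℤ) := by lia
  have hzpow := (hasDerivAt_zpow (-k : ℤ) y (.inl hy)).const_mul K
  simp only [hexp, zpow_neg, zpow_natCast, ← div_eq_mul_inv] at hzpow
  exact hzpow.congr_deriv (by push_cast; ring)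

lemma hasDerivAt_const_div_sq {y : ℝ} (hy : y ≠ 0) :
    HasDerivAt (fun y : ℝ ↦ K / y ^ 2) (-2 * K / y ^ 3) y :=
  (hasDerivAt_const_div_pow 2 hy).congr_deriv (by norm_num)

lemma hasDerivAt_timeBarrier {s : ℝ} (hs : s ∈ Ioo a b) :
    HasDerivAt (timeBarrier A ε a b) (-A / (s - a) ^ 2 + ε / (b - s) ^ 2) s := by
  have hsa : s - a ≠ 0 := (sub_pos.2 hs.1).ne'
  have hbs : b - s ≠ 0 := (sub_pos.2 hs.2).ne'
  have hsum : HasDerivAt (fun s ↦ A / (s - a) + ε / (b - s)) _ s :=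
    ((hasDerivAt_const s A).div ((hasDerivAt_id' s).sub_const a) hsa).add
      ((hasDerivAt_const s ε).div ((hasDerivAt_id' s).const_sub b) hbs)
  exact hsum.congr_deriv (by simp)

lemma contDiffAt_timeBarrier_snd (hp : p.2 ∈ Ioo a b) :
    ContDiffAt ℝ 2 (fun q : E × ℝ ↦ timeBarrier A ε a b q.2) p :=
  (contDiffAt_const.div (contDiffAt_snd.sub contDiffAt_const) (sub_pos.2 hp.1).ne').add
    (contDiffAt_const.div (contDiffAt_const.sub contDiffAt_snd) (sub_pos.2 hp.2).ne')

lemma contDiffAt_const_div_radialDefect_sq (hq : radialDefect x₀ ρ p ≠ 0) :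
    ContDiffAt ℝ 2 (fun q ↦ K / radialDefect x₀ ρ q ^ 2) p :=
  contDiffAt_const.div (contDiff_radialDefect.contDiffAt.pow 2) (pow_ne_zero 2 hq)

lemma contDiffAt_cylinderBarrier (hp : p.2 ∈ Ioo a b) (hq : radialDefect x₀ ρ p ≠ 0) :
    ContDiffAt ℝ 2 (cylinderBarrier A ε a b K ρ x₀) p :=
  (contDiffAt_timeBarrier_snd hp).add (contDiffAt_const_div_radialDefect_sq hq)

lemma frameLaplacian_cylinderBarrier (hp : p.2 ∈ Ioo a b) (hq : radialDefect x₀ ρ p ≠ 0) :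
    frameLaplacian (spaceFrame o) (cylinderBarrier A ε a b K ρ x₀) p =
      4 * Fintype.card ι * K / radialDefect x₀ ρ p ^ 3 +
        24 * K * ‖p.1 - x₀‖ ^ 2 / radialDefect x₀ ρ p ^ 4 := by
  unfold cylinderBarrier
  have hφ : ∀ᶠ y in 𝓝 (radialDefect x₀ ρ p),
      HasDerivAt (fun y : ℝ ↦ K / y ^ 2) (-2 * K / y ^ 3) y :=
    (eventually_ne_nhds hq).mono fun y hy ↦ hasDerivAt_const_div_sq hy
  have hφ' : HasDerivAt (fun y : ℝ ↦ -2 * K / y ^ 3) (6 * K / radialDefect x₀ ρ p ^ 4)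
      (radialDefect x₀ ρ p) := (hasDerivAt_const_div_pow 3 hq).congr_deriv (by push_cast; ring)
  rw [frameLaplacian_add (contDiffAt_timeBarrier_snd hp) (contDiffAt_const_div_radialDefect_sq hq),
    frameLaplacian_comp_snd_eq_zero,
    frameLaplacian_comp hφ hφ' contDiff_radialDefect.contDiffAt,
    frameLaplacian_radialDefect, gradInner_radialDefect]
  ring

lemma gradInner_cylinderBarrier (hp : p.2 ∈ Ioo a b) (hq : radialDefect x₀ ρ p ≠ 0) :
    gradInner (spaceFrame o) (cylinderBarrier A ε a b K ρ x₀) (cylinderBarrier A ε a b K ρ x₀) p =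
      16 * K ^ 2 * ‖p.1 - x₀‖ ^ 2 / radialDefect x₀ ρ p ^ 6 := by
  have hspatial (i : ι) : dirDeriv (spaceFrame o i) (cylinderBarrier A ε a b K ρ x₀) p =
      dirDeriv (spaceFrame o i) (fun q ↦ K / radialDefect x₀ ρ q ^ 2) p := by
    unfold cylinderBarrier
    rw [dirDeriv_add ((contDiffAt_timeBarrier_snd hp).differentiableAt two_ne_zero)
      ((contDiffAt_const_div_radialDefect_sq hq).differentiableAt two_ne_zero), spaceFrame,
      dirDeriv_comp_snd_eq_zero, Pi.zero_apply, zero_add]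
  have hchain := gradInner_comp_comp (e := spaceFrame o) (hasDerivAt_const_div_sq (K := K) hq)
    (contDiff_radialDefect.contDiffAt.differentiableAt two_ne_zero)
  rw [gradInner_radialDefect] at hchain
  unfold gradInner at hchain ⊢
  simp only [hspatial, hchain]
  ring

lemma dirDeriv_timeDir_cylinderBarrier (hp : p.2 ∈ Ioo a b) (hq : radialDefect x₀ ρ p ≠ 0) :
    dirDeriv timeDir (cylinderBarrier A ε a b K ρ x₀) p =
      -A / (p.2 - a) ^ 2 + ε / (b - p.2) ^ 2 := by
  unfold cylinderBarrier
  rw [dirDeriv_add ((contDiffAt_timeBarrier_snd hp).differentiableAt two_ne_zero)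
      ((contDiffAt_const_div_radialDefect_sq hq).differentiableAt two_ne_zero),
    dirDeriv_comp (hasDerivAt_timeBarrier hp) differentiableAt_snd,
    dirDeriv_comp (hasDerivAt_const_div_sq hq)
      (contDiff_radialDefect.contDiffAt.differentiableAt two_ne_zero), dirDeriv_radialDefect]
  simp [dirDeriv, timeDir, fderiv_snd]

end SpaceTime

section LocalEstimate

variable {E ι : Type*} [NormedAddCommGroup E] [InnerProductSpace ℝ E] [Fintype ι]
  {o : OrthonormalBasis ι ℝ E} {x₀ : E} {A β ε a b K ρ : ℝ} {p : E × ℝ}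

lemma frameLaplacian_cylinderBarrier_le (hK : 0 ≤ K) (hp : p ∈ cylinder x₀ ρ a b) :
    frameLaplacian (spaceFrame o) (cylinderBarrier A ε a b K ρ x₀) p ≤
      (24 + 4 * Fintype.card ι) * ρ ^ 2 * K / radialDefect x₀ ρ p ^ 4 := by
  have hq := radialDefect_pos hp
  have hsplit : radialDefect x₀ ρ p + ‖p.1 - x₀‖ ^ 2 = ρ ^ 2 := sub_add_cancel _ _
  rw [frameLaplacian_cylinderBarrier hp.2 hq.ne']
  calc 4 * Fintype.card ι * K / radialDefect x₀ ρ p ^ 3 +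
        24 * K * ‖p.1 - x₀‖ ^ 2 / radialDefect x₀ ρ p ^ 4
      = (24 * ‖p.1 - x₀‖ ^ 2 + 4 * Fintype.card ι * radialDefect x₀ ρ p) * K /
          radialDefect x₀ ρ p ^ 4 := by field_simp; ring
    _ ≤ (24 * ρ ^ 2 + 4 * Fintype.card ι * ρ ^ 2) * K / radialDefect x₀ ρ p ^ 4 := by
        gcongr (24 * ?_ + 4 * _ * ?_) * K / _
        all_goals linarith [sq_nonneg ‖p.1 - x₀‖]
    _ = _ := by ring

lemma gradInner_cylinderBarrier_div_le (hA : 0 ≤ A) (hε : 0 ≤ ε) (hK : 0 < K)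
    (hp : p ∈ cylinder x₀ ρ a b) :
    gradInner (spaceFrame o) (cylinderBarrier A ε a b K ρ x₀) (cylinderBarrier A ε a b K ρ x₀) p /
        cylinderBarrier A ε a b K ρ x₀ p ≤
      16 * ρ ^ 2 * K / radialDefect x₀ ρ p ^ 4 := by
  have hq := radialDefect_pos hp
  have hstart : 0 ≤ A / (p.2 - a) := div_nonneg hA (sub_pos.2 hp.2.1).le
  have hlower : K / radialDefect x₀ ρ p ^ 2 ≤ cylinderBarrier A ε a b K ρ x₀ p :=
    (le_add_of_nonneg_left hstart).trans (add_le_cylinderBarrier hε hp)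
  have hnorm : ‖p.1 - x₀‖ ^ 2 ≤ ρ ^ 2 := (sub_pos.1 hq).le
  rw [gradInner_cylinderBarrier hp.2 hq.ne']
  calc 16 * K ^ 2 * ‖p.1 - x₀‖ ^ 2 / radialDefect x₀ ρ p ^ 6 / cylinderBarrier A ε a b K ρ x₀ p
      ≤ 16 * K ^ 2 * ρ ^ 2 / radialDefect x₀ ρ p ^ 6 / (K / radialDefect x₀ ρ p ^ 2) := by gcongr
    _ = 16 * ρ ^ 2 * K / radialDefect x₀ ρ p ^ 4 := by field_simp

lemma le_dirDeriv_timeDir_cylinderBarrier_add_sq_div (hA : 0 < A) (hε : 0 ≤ ε) (hK : 0 ≤ K)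
    (hp : p ∈ cylinder x₀ ρ a b) :
    K ^ 2 / A / radialDefect x₀ ρ p ^ 4 ≤
      dirDeriv timeDir (cylinderBarrier A ε a b K ρ x₀) p +
        cylinderBarrier A ε a b K ρ x₀ p ^ 2 / A := by
  have hq := radialDefect_pos hp
  have hs : 0 < p.2 - a := sub_pos.2 hp.2.1
  have hend : 0 ≤ ε / (b - p.2) ^ 2 := by positivity
  have hcross : 0 ≤ 2 * K / ((p.2 - a) * radialDefect x₀ ρ p ^ 2) := by positivity
  have hsq : (A / (p.2 - a) + K / radialDefect x₀ ρ p ^ 2) ^ 2 / A ≤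
      cylinderBarrier A ε a b K ρ x₀ p ^ 2 / A := by
    gcongr
    exact add_le_cylinderBarrier hε hp
  have hexpand : (A / (p.2 - a) + K / radialDefect x₀ ρ p ^ 2) ^ 2 / A =
      A / (p.2 - a) ^ 2 + 2 * K / ((p.2 - a) * radialDefect x₀ ρ p ^ 2) +
        K ^ 2 / A / radialDefect x₀ ρ p ^ 4 := by field_simp; ring
  rw [dirDeriv_timeDir_cylinderBarrier hp.2 hq.ne', neg_div]
  linarith

lemma isLiYauSupersolutionAt_cylinderBarrier (hA : 0 < A) (hβ : 1 < β) (hε : 0 ≤ ε) (hK : 0 < K)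
    (hcoef : A * (ρ ^ 2 * (24 + 4 * Fintype.card ι + 8 * A / (β - 1))) ≤ K)
    (hp : p ∈ cylinder x₀ ρ a b) :
    IsLiYauSupersolutionAt (spaceFrame o) timeDir A β (cylinderBarrier A ε a b K ρ x₀) p := by
  have hβ₁ : 0 < β - 1 := sub_pos.2 hβ
  have hq := radialDefect_pos hp
  rw [IsLiYauSupersolutionAt]
  calc frameLaplacian (spaceFrame o) (cylinderBarrier A ε a b K ρ x₀) p +
        A / (2 * (β - 1)) * (gradInner (spaceFrame o) (cylinderBarrier A ε a b K ρ x₀)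
          (cylinderBarrier A ε a b K ρ x₀) p / cylinderBarrier A ε a b K ρ x₀ p)
      ≤ (24 + 4 * Fintype.card ι) * ρ ^ 2 * K / radialDefect x₀ ρ p ^ 4 +
          A / (2 * (β - 1)) * (16 * ρ ^ 2 * K / radialDefect x₀ ρ p ^ 4) := by
        gcongr ?_ + _ * ?_
        · exact frameLaplacian_cylinderBarrier_le hK.le hp
        · exact gradInner_cylinderBarrier_div_le hA.le hε hK hp
    _ = A * (ρ ^ 2 * (24 + 4 * Fintype.card ι + 8 * A / (β - 1))) * K / A /
          radialDefect x₀ ρ p ^ 4 := by field_simp; ring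
    _ ≤ K ^ 2 / A / radialDefect x₀ ρ p ^ 4 := by rw [sq K]; gcongr
    _ ≤ _ := le_dirDeriv_timeDir_cylinderBarrier_add_sq_div hA hε hK.le hp

theorem liYauQuantity_le_cylinderBarrier {f : E × ℝ → ℝ} (hA : 0 < A) (hβ : 1 < β)
    (hcard : Fintype.card ι * β ^ 2 ≤ 2 * A) (hε : 0 < ε) (hK : 0 < K)
    (hcoef : A * (ρ ^ 2 * (24 + 4 * Fintype.card ι + 8 * A / (β - 1))) ≤ K)
    (hf : ∀ q ∈ Metric.closedBall x₀ ρ ×ˢ Icc a b, ContDiffAt ℝ 3 f q)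
    (heq : ∀ q ∈ cylinder x₀ ρ a b, dirDeriv timeDir f q =
      frameLaplacian (spaceFrame o) f q + gradInner (spaceFrame o) f f q)
    (hp : p ∈ cylinder x₀ ρ a b) :
    liYauQuantity (spaceFrame o) timeDir β f p ≤ cylinderBarrier A ε a b K ρ x₀ p := by
  have : FiniteDimensional ℝ E := o.toBasis.finiteDimensional_of_finite
  have : ProperSpace E := FiniteDimensional.proper ℝ E
  have barrier_pos (q : E × ℝ) (hq : q ∈ cylinder x₀ ρ a b) :
      0 < cylinderBarrier A ε a b K ρ x₀ q :=
    (add_pos (div_pos hA (sub_pos.2 hq.2.1))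
      (div_pos hK (pow_pos (radialDefect_pos hq) 2))).trans_le (add_le_cylinderBarrier hε.le hq)
  exact liYauQuantity_le_of_isLiYauSupersolutionAt hA hβ hcard
    (Metric.isOpen_ball.prod isOpen_Ioo) ((isCompact_closedBall x₀ ρ).prod isCompact_Icc)
    (prod_mono Metric.ball_subset_closedBall Ioo_subset_Icc_self) hf heq
    (fun q hq ↦ contDiffAt_cylinderBarrier hq.2 (radialDefect_pos hq).ne') barrier_pos
    (fun q hq ↦ isLiYauSupersolutionAt_cylinderBarrier hA hβ hε.le hK hcoef hq)
    (fun q hq ↦ tendsto_cylinderBarrier_atTop hA hε hK hq) hp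

end LocalEstimate

section GlobalEstimate

variable {E ι : Type*} [NormedAddCommGroup E]

lemma tendsto_cylinderBarrier_center (A b c : ℝ) (x : E) {t : ℝ} (ht : t ≠ 0) (htb : t ≠ b) :
    Tendsto (fun η : ℝ ↦ cylinderBarrier A η η b (A * ((η⁻¹) ^ 2 * c)) η⁻¹ x (x, t)) (𝓝[>] 0)
      (𝓝 (A / t)) := by
  have hlim : Tendsto (fun η : ℝ ↦ A / (t - η) + η / (b - t) + A * c * η ^ 2) (𝓝[>] 0)
      (𝓝 (A / (t - 0) + 0 / (b - t) + A * c * 0 ^ 2)) := by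
    refine Tendsto.mono_left (ContinuousAt.tendsto ?_) nhdsWithin_le_nhds
    fun_prop (disch := simpa)
  simp only [sub_zero, zero_div, zero_pow two_ne_zero, mul_zero, add_zero] at hlim
  refine hlim.congr' (eventually_mem_nhdsWithin.mono fun η hη ↦ ?_)
  have hη₀ : η ≠ 0 := (mem_Ioi.1 hη).ne'
  simp only [cylinderBarrier, timeBarrier, radialDefect, sub_self, norm_zero]
  field_simp
  ring

variable [InnerProductSpace ℝ E] [Fintype ι] {o : OrthonormalBasis ι ℝ E} {f : E × ℝ → ℝ}
  {A β T t : ℝ}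

lemma liYauQuantity_le_of_one_lt (hA : 0 < A) (hβ : 1 < β)
    (hcard : Fintype.card ι * β ^ 2 ≤ 2 * A)
    (hf : ∀ q : E × ℝ, q.2 ∈ Ioo 0 T → ContDiffAt ℝ 3 f q)
    (heq : ∀ q : E × ℝ, q.2 ∈ Ioo 0 T → dirDeriv timeDir f q =
      frameLaplacian (spaceFrame o) f q + gradInner (spaceFrame o) f f q)
    (x : E) (ht : t ∈ Ioo 0 T) :
    liYauQuantity (spaceFrame o) timeDir β f (x, t) ≤ A / t := by
  obtain ⟨b, htb, hbT⟩ := exists_between ht.2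
  have hcoef : 0 < 24 + 4 * Fintype.card ι + 8 * A / (β - 1) :=
    add_pos (by positivity) (div_pos (by positivity) (sub_pos.2 hβ))
  refine ge_of_tendsto (tendsto_cylinderBarrier_center A b
    (24 + 4 * Fintype.card ι + 8 * A / (β - 1)) x ht.1.ne' htb.ne) ?_
  filter_upwards [Ioo_mem_nhdsGT ht.1] with η hη
  have hη₀ : 0 < η := hη.1
  exact liYauQuantity_le_cylinderBarrier hA hβ hcard hη₀
    (mul_pos hA (mul_pos (pow_pos (inv_pos.2 hη₀) 2) hcoef)) le_rfl
    (fun q hq ↦ hf q ⟨hη₀.trans_le hq.2.1, hq.2.2.trans_lt hbT⟩)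
    (fun q hq ↦ heq q ⟨hη₀.trans hq.2.1, hq.2.2.trans hbT⟩)
    ⟨Metric.mem_ball_self (inv_pos.2 hη₀), hη.2, htb⟩

theorem liYauQuantity_le (hβ : 1 ≤ β)
    (hf : ∀ q : E × ℝ, q.2 ∈ Ioc 0 T → ContDiffAt ℝ 3 f q)
    (heq : ∀ q : E × ℝ, q.2 ∈ Ioo 0 T → dirDeriv timeDir f q =
      frameLaplacian (spaceFrame o) f q + gradInner (spaceFrame o) f f q)
    (x : E) (ht : t ∈ Ioc 0 T) :
    liYauQuantity (spaceFrame o) timeDir β f (x, t) ≤ Fintype.card ι / 2 * β ^ 2 / t := by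
  have happrox : ∀ᶠ η in 𝓝[>] (0 : ℝ),
      liYauQuantity (spaceFrame o) timeDir (β + η) f (x, t - η) ≤
        (Fintype.card ι / 2 * (β + η) ^ 2 + η) / (t - η) := by
    filter_upwards [Ioo_mem_nhdsGT ht.1] with η ⟨hη₀, hηt⟩
    exact liYauQuantity_le_of_one_lt (by positivity) (by linarith) (by linarith)
      (fun q hq ↦ hf q (Ioo_subset_Ioc_self hq)) heq x ⟨sub_pos.2 hηt, by linarith [ht.2]⟩
  have hpath : Tendsto (fun η : ℝ ↦ (x, t - η)) (𝓝[>] 0) (𝓝 (x, t)) :=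
    tendsto_nhdsWithin_of_tendsto_nhds (Continuous.tendsto' (by fun_prop) _ _ (by simp))
  have hbeta : Tendsto (fun η : ℝ ↦ β + η) (𝓝[>] 0) (𝓝 β) :=
    tendsto_nhdsWithin_of_tendsto_nhds (Continuous.tendsto' (by fun_prop) _ _ (by simp))
  have hfxt : ContDiffAt ℝ (2 + 1) f (x, t) := (hf _ ht).of_le (by norm_num)
  have hquantity : Tendsto (fun η ↦ liYauQuantity (spaceFrame o) timeDir (β + η) f (x, t - η))
      (𝓝[>] 0) (𝓝 (liYauQuantity (spaceFrame o) timeDir β f (x, t))) :=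
    ((contDiffAt_gradInner_self hfxt le_rfl).continuousAt.tendsto.comp hpath).sub <|
      hbeta.mul ((contDiffAt_dirDeriv hfxt le_rfl timeDir).continuousAt.tendsto.comp hpath)
  have hbound : ContinuousAt
      (fun η : ℝ ↦ (Fintype.card ι / 2 * (β + η) ^ 2 + η) / (t - η)) 0 := by
    fun_prop (disch := simpa using ht.1.ne')
  simpa using le_of_tendsto_of_tendsto hquantity
    (hbound.tendsto.mono_left nhdsWithin_le_nhds) happrox

end GlobalEstimate

section Logarithm

variable {V ι : Type*} [NormedAddCommGroup V] [NormedSpace ℝ V] [Fintype ι] {e : ι → V} {τ : V}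
  {F : V → ℝ} {p : V}

lemma frameLaplacian_log_add_gradInner_log (hF : ContDiffAt ℝ 2 F p) (hFp : F p ≠ 0) :
    frameLaplacian e (fun q ↦ Real.log (F q)) p +
        gradInner e (fun q ↦ Real.log (F q)) (fun q ↦ Real.log (F q)) p =
      (F p)⁻¹ * frameLaplacian e F p := by
  have hlog : ∀ᶠ y in 𝓝 (F p), HasDerivAt Real.log y⁻¹ y :=
    (eventually_ne_nhds hFp).mono fun y hy ↦ Real.hasDerivAt_log hy
  rw [frameLaplacian_comp hlog (hasDerivAt_inv hFp) hF,
    gradInner_comp_comp (Real.hasDerivAt_log hFp) (hF.differentiableAt two_ne_zero)]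
  ring

lemma dirDeriv_log_eq_of_heat (hF : ContDiffAt ℝ 2 F p) (hFp : F p ≠ 0)
    (hheat : dirDeriv τ F p = frameLaplacian e F p) :
    dirDeriv τ (fun q ↦ Real.log (F q)) p =
      frameLaplacian e (fun q ↦ Real.log (F q)) p +
        gradInner e (fun q ↦ Real.log (F q)) (fun q ↦ Real.log (F q)) p := by
  rw [frameLaplacian_log_add_gradInner_log hF hFp, ← hheat,
    dirDeriv_comp (Real.hasDerivAt_log hFp) (hF.differentiableAt two_ne_zero)]

lemma liYauQuantity_log {β : ℝ} (hF : DifferentiableAt ℝ F p) (hFp : F p ≠ 0) :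
    liYauQuantity e τ β (fun q ↦ Real.log (F q)) p =
      gradInner e F F p / F p ^ 2 - β * dirDeriv τ F p / F p := by
  rw [liYauQuantity, gradInner_comp_comp (Real.hasDerivAt_log hFp) hF,
    dirDeriv_comp (Real.hasDerivAt_log hFp) hF]
  ring

end Logarithm

section Slices

lemma dirDeriv_eq_fderiv_slice {E : Type*} [NormedAddCommGroup E] [NormedSpace ℝ E]
    {F : E × ℝ → ℝ} {x : E} {t : ℝ} (hF : DifferentiableAt ℝ F (x, t)) (w : E) :
    dirDeriv (w, 0) F (x, t) = fderiv ℝ (fun y ↦ F (y, t)) x w := by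
  have hslice : HasFDerivAt (fun y ↦ F (y, t)) _ x :=
    hF.hasFDerivAt.comp x (hasFDerivAt_prodMk_left x t)
  simp [dirDeriv, hslice.fderiv]

lemma dirDeriv_timeDir_eq_deriv_slice {E : Type*} [NormedAddCommGroup E] [NormedSpace ℝ E]
    {F : E × ℝ → ℝ} {x : E} {t : ℝ} (hF : DifferentiableAt ℝ F (x, t)) :
    dirDeriv timeDir F (x, t) = deriv (fun s ↦ F (x, s)) t :=
  (hF.hasFDerivAt.comp_hasDerivAt t ((hasDerivAt_const t x).prodMk (hasDerivAt_id t))).deriv.symm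

variable {n : ℕ} {F : EuclideanSpace ℝ (Fin n) × ℝ → ℝ} {x : EuclideanSpace ℝ (Fin n)} {t : ℝ}

lemma frameLaplacian_eq_laplacian_slice (hF : ContDiffAt ℝ 2 F (x, t)) :
    frameLaplacian (spaceFrame (EuclideanSpace.basisFun (Fin n) ℝ)) F (x, t) =
      laplacian (fun y ↦ F (y, t)) x := by
  refine Finset.sum_congr rfl fun i _ ↦ ?_
  have hslice : Tendsto (fun y : EuclideanSpace ℝ (Fin n) ↦ (y, t)) (𝓝 x) (𝓝 (x, t)) :=
    Continuous.tendsto (by fun_prop) x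
  have hfirst : (fun y ↦ dirDeriv (EuclideanSpace.single i 1, 0) F (y, t)) =ᶠ[𝓝 x]
      fun y ↦ fderiv ℝ (fun z ↦ F (z, t)) y (EuclideanSpace.single i 1) :=
    (hslice.eventually (eventually_differentiableAt hF)).mono
      fun y hy ↦ dirDeriv_eq_fderiv_slice hy _
  rw [spaceFrame, EuclideanSpace.basisFun_apply,
    dirDeriv_eq_fderiv_slice (differentiableAt_dirDeriv hF _), hfirst.fderiv_eq]

lemma gradInner_eq_norm_gradient_slice_sq (hF : DifferentiableAt ℝ F (x, t)) :
    gradInner (spaceFrame (EuclideanSpace.basisFun (Fin n) ℝ)) F F (x, t) =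
      ‖gradient (fun y ↦ F (y, t)) x‖ ^ 2 := by
  rw [← (EuclideanSpace.basisFun (Fin n) ℝ).sum_sq_inner_left]
  refine Finset.sum_congr rfl fun i _ ↦ ?_
  rw [spaceFrame, dirDeriv_eq_fderiv_slice hF, gradient, InnerProductSpace.toDual_symm_apply, sq]

end Slices

end LiYau

theorem global_gradient_estimate_flat_general {n : ℕ} {T : ℝ}
    {u : EuclideanSpace ℝ (Fin n) → ℝ → ℝ}
    (hu : ∀ x, ∀ t ∈ Set.Ioc 0 T,
      ContDiffAt ℝ 3 (fun p : EuclideanSpace ℝ (Fin n) × ℝ ↦ u p.1 p.2) (x, t))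
    (hpos : ∀ x, ∀ t ∈ Set.Ioc 0 T, 0 < u x t)
    (hheat : ∀ x, ∀ t ∈ Set.Ioo 0 T, deriv (fun s ↦ u x s) t = laplacian (fun y ↦ u y t) x)
    {β : ℝ} (hβ : 1 ≤ β) (x : EuclideanSpace ℝ (Fin n)) {t : ℝ} (ht : t ∈ Set.Ioc 0 T) :
    ‖gradient (fun y ↦ u y t) x‖ ^ 2 / u x t ^ 2 - β * deriv (fun s ↦ u x s) t / u x t ≤
      n / 2 * β ^ 2 / t := by
  have hu₂ (y : EuclideanSpace ℝ (Fin n)) {s : ℝ} (hs : s ∈ Set.Ioc 0 T) :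
      ContDiffAt ℝ 2 (fun p : EuclideanSpace ℝ (Fin n) × ℝ ↦ u p.1 p.2) (y, s) :=
    (hu y s hs).of_le (by norm_num)
  have hdiff := (hu₂ x ht).differentiableAt two_ne_zero
  have hlog (q : EuclideanSpace ℝ (Fin n) × ℝ) (hq : q.2 ∈ Set.Ioo 0 T) :=
    have hq' := Set.Ioo_subset_Ioc_self hq
    LiYau.dirDeriv_log_eq_of_heat (hu₂ q.1 hq') (hpos q.1 q.2 hq').ne' <| by
      rw [LiYau.dirDeriv_timeDir_eq_deriv_slice ((hu₂ q.1 hq').differentiableAt two_ne_zero),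
        LiYau.frameLaplacian_eq_laplacian_slice (hu₂ q.1 hq'), hheat q.1 q.2 hq]
  have hestimate := LiYau.liYauQuantity_le hβ
    (fun q hq ↦ (hu q.1 q.2 hq).log (hpos q.1 q.2 hq).ne') hlog x ht
  rwa [LiYau.liYauQuantity_log hdiff (hpos x t ht).ne',
    LiYau.gradInner_eq_norm_gradient_slice_sq hdiff, LiYau.dirDeriv_timeDir_eq_deriv_slice hdiff,
    Fintype.card_fin] at hestimate

/-- The global gradient estimate obtained from Theorem 1.2 by letting `ρ → ∞`, in
the static Euclidean case: there is `C′ = C′(n) > 0` such that every positive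
solution of the heat equation satisfies `‖∇u‖²/u² − β uₜ/u ≤ C′β²/t` for `β > 1`. -/
theorem global_gradient_estimate_flat (n : ℕ) (hn : 1 ≤ n) :
    ∃ C' : ℝ, 0 < C' ∧
      ∀ T : ℝ, 0 < T →
        ∀ u : EuclideanSpace ℝ (Fin n) → ℝ → ℝ,
          ContDiff ℝ (⊤ : ℕ∞) (fun p : EuclideanSpace ℝ (Fin n) × ℝ => u p.1 p.2) →
          (∀ x, ∀ t ∈ Set.Icc 0 T, 0 < u x t) →
          (∀ x, ∀ t ∈ Set.Icc 0 T,
            deriv (fun s => u x s) t = laplacian (fun y => u y t) x) →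
          ∀ β : ℝ, 1 < β →
            ∀ x : EuclideanSpace ℝ (Fin n), ∀ t ∈ Set.Ioc 0 T,
              ‖gradient (fun y => u y t) x‖ ^ 2 / (u x t) ^ 2 -
                  β * deriv (fun s => u x s) t / u x t ≤
                C' * β ^ 2 / t := by
  refine ⟨n / 2, by positivity, fun T _ u hu hpos hheat β hβ x t ht ↦ ?_⟩
  exact global_gradient_estimate_flat_general
    (fun y s _ ↦ hu.contDiffAt.of_le ENat.LEInfty.out)
    (fun y s hs ↦ hpos y s (Set.Ioc_subset_Icc_self hs))
    (fun y s hs ↦ hheat y s (Set.Ioo_subset_Icc_self hs)) hβ.le x ht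
end
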